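/- Let (X,d) be a compact metric space, f: X → X a continuous map with the g-almost product property for some blowup function g, and φ: X → ℝ a continuous function. If the irregular set I_φ is nonempty, then I_φ^C is nonempty and mdim_M^B-upper(I_φ,f,d) = mdim_M^B-upper(I_φ^C,f,d) = mdim_M^B-upper(X,f,d). -/

import Mathlib

open MeasureTheory Filter Set Topology
open scoped ENNReal NNReal

noncomputable section

namespace MMD

variable {X : Type*}

/-! ### Bowen balls, Bowen topological entropy and metric mean dimension -/

/-- The Bowen ball `B_n(x,ε) = {y | d_n(x,y) < ε}` where `d_n` is the Bowen metric. -/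
def bowenBall [PseudoMetricSpace X] (f : X → X) (x : X) (n : ℕ) (ε : ℝ) : Set X :=
  {y | ∀ i < n, dist (f^[i] x) (f^[i] y) < ε}

/-- The weight sum `Σ_{(x,n) ∈ C} exp (-s n)` of a (countable) collection of Bowen balls,
encoded by its set of centers/lengths. -/
def coverSum (s : ℝ) (C : Set (X × ℕ)) : ℝ≥0∞ :=
  ∑' p : C, ENNReal.ofReal (Real.exp (-s * ((p : X × ℕ).2 : ℝ)))

/-- `m(Z,s,N,ε,f)`: infimum over countable (or finite) covers of `Z` by Bowen balls
`B_{n_i}(x_i,ε)` with `n_i ≥ N` of `Σ exp (-s n_i)`. -/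
def mB [PseudoMetricSpace X] (f : X → X) (Z : Set X) (s : ℝ) (N : ℕ) (ε : ℝ) : ℝ≥0∞ :=
  ⨅ (C : Set (X × ℕ)) (_ : C.Countable) (_ : ∀ p ∈ C, N ≤ p.2)
    (_ : Z ⊆ ⋃ p ∈ C, bowenBall f p.1 p.2 ε), coverSum s C

/-- `m(Z,s,ε) = lim_{N→∞} m(Z,s,N,ε,f)`; the limit of this monotone quantity is the sup. -/
def mBLim [PseudoMetricSpace X] (f : X → X) (Z : Set X) (s : ℝ) (ε : ℝ) : ℝ≥0∞ :=
  ⨆ N : ℕ, mB f Z s N ε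

/-- The Bowen topological entropy of `Z` at scale `ε`:
`h_top^B(Z,f,ε) = inf {s | m(Z,s,ε) = 0}`. -/
def hB [PseudoMetricSpace X] (f : X → X) (Z : Set X) (ε : ℝ) : ℝ :=
  sInf {s : ℝ | mBLim f Z s ε = 0}

/-- Upper Bowen metric mean dimension of `Z`. -/
def mdimUpper [PseudoMetricSpace X] (f : X → X) (Z : Set X) : ℝ :=
  limsup (fun ε : ℝ => hB f Z ε / |Real.log ε|) (𝓝[>] (0:ℝ))

/-- Lower Bowen metric mean dimension of `Z`. -/
def mdimLower [PseudoMetricSpace X] (f : X → X) (Z : Set X) : ℝ :=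
  liminf (fun ε : ℝ => hB f Z ε / |Real.log ε|) (𝓝[>] (0:ℝ))

/-! ### Finite measurable partitions and measure-theoretic entropy -/

/-- `P` is a finite measurable partition of `X` (mod `μ`): its elements are measurable,
they cover `X` up to a `μ`-null set, and they pairwise intersect in `μ`-null sets. -/
def IsPartition [MeasurableSpace X] (μ : Measure X) (P : Finset (Set X)) : Prop :=
  (∀ A ∈ P, MeasurableSet A) ∧ μ (Set.univ \ ⋃ A ∈ P, A) = 0 ∧
    ∀ A ∈ P, ∀ B ∈ P, A ≠ B → μ (A ∩ B) = 0

/-- Static entropy `H_μ(P) = -Σ_{A∈P} μ(A) log μ(A)`. -/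
def partEnt [MeasurableSpace X] (μ : Measure X) (P : Finset (Set X)) : ℝ :=
  ∑ A ∈ P, Real.negMulLog ((μ A).toReal)

/-- Join (common refinement) of two finite families of sets. -/
def joinParts (P Q : Finset (Set X)) : Finset (Set X) :=
  letI := Classical.decEq (Set X)
  (P ×ˢ Q).image fun p => p.1 ∩ p.2

/-- `dynJoin f P n = ⋁_{j=0}^{n-1} f^{-j} P`. -/
def dynJoin (f : X → X) (P : Finset (Set X)) : ℕ → Finset (Set X)
  | 0 => {Set.univ}
  | n + 1 =>
      letI := Classical.decEq (Set X)
      joinParts P ((dynJoin f P n).image fun A => f ⁻¹' A)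

/-- Measure-theoretic entropy of `f` w.r.t. the partition `P`:
`h_μ(f,P) = lim_n (1/n) H_μ(⋁_{j<n} f^{-j}P)` (the limit exists, hence equals the `limsup`). -/
def dynEnt [MeasurableSpace X] (μ : Measure X) (f : X → X) (P : Finset (Set X)) : ℝ :=
  limsup (fun n : ℕ => partEnt μ (dynJoin f P n) / n) atTop

/-- `diam P < ε`, i.e. every element of `P` has diameter `< ε`. -/
def partDiamLt [PseudoMetricSpace X] (P : Finset (Set X)) (ε : ℝ) : Prop :=
  ∀ A ∈ P, Metric.diam A < ε

/-- `inf_{ξ : diam ξ < ε} h_μ(f,ξ)`, the infimum over all finite measurable partitions of `X`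
with diameter `< ε`. -/
def infEnt [PseudoMetricSpace X] [MeasurableSpace X] (μ : Measure X) (f : X → X) (ε : ℝ) : ℝ :=
  sInf (dynEnt μ f '' {P : Finset (Set X) | IsPartition μ P ∧ partDiamLt P ε})

/-! ### Empirical measures, generic points and saturated sets -/

/-- The `n`-th empirical measure `E_n(x) = (1/n) Σ_{j<n} δ_{f^j x}` (defined as `E_1(x)`
for `n = 0`, a junk value). -/
def empMeasure [MeasurableSpace X] (f : X → X) (x : X) (n : ℕ) : Measure X :=
  ((max n 1 : ℕ) : ℝ≥0∞)⁻¹ • ∑ j ∈ Finset.range (max n 1), Measure.dirac (f^[j] x)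

instance [MeasurableSpace X] (f : X → X) (x : X) (n : ℕ) :
    IsProbabilityMeasure (empMeasure f x n) := by
  constructor
  have h1 : (0:ℕ) < max n 1 := lt_of_lt_of_le one_pos (le_max_right n 1)
  have hsum : (∑ j ∈ Finset.range (max n 1), Measure.dirac (f^[j] x)) Set.univ
      = ((max n 1 : ℕ) : ℝ≥0∞) := by
    rw [Measure.finset_sum_apply]
    simp
  simp only [empMeasure, Measure.smul_apply, smul_eq_mul, hsum]
  exact ENNReal.inv_mul_cancel (by exact_mod_cast h1.ne') (by simp)

/-- The `n`-th empirical measure as a probability measure. -/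
def empProb [MeasurableSpace X] (f : X → X) (x : X) (n : ℕ) : ProbabilityMeasure X :=
  ⟨empMeasure f x n, inferInstance⟩

/-- `V_f(x)`: the set of weak* limit points of the sequence of empirical measures of `x`. -/
def Vf [MetricSpace X] [MeasurableSpace X] [BorelSpace X] (f : X → X) (x : X) :
    Set (ProbabilityMeasure X) :=
  {ν | MapClusterPt ν atTop (empProb f x)}

/-- The saturated set `G_K = {x | V_f(x) = K}`. -/
def GK [MetricSpace X] [MeasurableSpace X] [BorelSpace X] (f : X → X)
    (K : Set (ProbabilityMeasure X)) : Set X :=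
  {x | Vf f x = K}

/-- The generic set `G_μ = {x | V_f(x) = {μ}}`. -/
def genSet [MetricSpace X] [MeasurableSpace X] [BorelSpace X] (f : X → X)
    (μ : ProbabilityMeasure X) : Set X :=
  GK f {μ}

/-! ### Invariant measures, supports, measure center, omega-limit sets -/

/-- `μ` is an `f`-invariant (Borel probability) measure. -/
def InvariantProb [MeasurableSpace X] (f : X → X) (μ : ProbabilityMeasure X) : Prop :=
  Measure.map f (μ : Measure X) = (μ : Measure X)

/-- The set `M_f(X)` of invariant probability measures. -/
def invSet [MeasurableSpace X] (f : X → X) : Set (ProbabilityMeasure X) :=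
  {μ | InvariantProb f μ}

/-- The support of a measure: points all of whose neighborhoods have positive measure. -/
def measSupport [TopologicalSpace X] [MeasurableSpace X] (μ : Measure X) : Set X :=
  {x | ∀ U ∈ 𝓝 x, 0 < μ U}

/-- The measure center `C_f(X) = closure (⋃_{μ ∈ M_f(X)} S_μ)`. -/
def measCenter [TopologicalSpace X] [MeasurableSpace X] (f : X → X) : Set X :=
  closure (⋃ μ ∈ invSet f, measSupport (μ : Measure X))

/-- The omega-limit set `ω_f(x) = ⋂_n closure {f^k x : k ≥ n}`. -/
def omegaSet [TopologicalSpace X] (f : X → X) (x : X) : Set X :=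
  ⋂ n : ℕ, closure {y | ∃ k, n ≤ k ∧ f^[k] x = y}

/-- The set of points whose omega-limit set contains the measure center. -/
def CtrSet [TopologicalSpace X] [MeasurableSpace X] (f : X → X) : Set X :=
  {x | measCenter f ⊆ omegaSet f x}

/-! ### Blow-up functions and the g-almost product property -/

/-- A blowup function: nondecreasing, unbounded, `g n < n` and `g n / n → 0`. -/
structure IsBlowup (g : ℕ → ℕ) : Prop where
  mono : Monotone g
  unbounded : ∀ C : ℕ, ∃ n, C < g n
  lt_self : ∀ n, 0 < n → g n < n
  ratio_tendsto_zero : Tendsto (fun n : ℕ => (g n : ℝ) / n) atTop (𝓝 0)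

/-- The g-blowup `B_n(g;x,ε)` of the Bowen ball `B_n(x,ε)`. -/
def blowupBall [PseudoMetricSpace X] (f : X → X) (g : ℕ → ℕ) (x : X) (n : ℕ) (ε : ℝ) :
    Set X :=
  {y | ∃ Λ : Finset ℕ, Λ ⊆ Finset.range n ∧
    letI := Classical.decEq ℕ
    (Finset.range n \ Λ).card ≤ g n ∧ ∀ j ∈ Λ, dist (f^[j] x) (f^[j] y) ≤ ε}

/-- The g-almost product property. -/
def GAlmostProduct [PseudoMetricSpace X] (f : X → X) (g : ℕ → ℕ) : Prop :=
  ∃ m : ℝ → ℕ, (∀ s t : ℝ, 0 < s → s ≤ t → m t ≤ m s) ∧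
    ∀ (k : ℕ) (x : ℕ → X) (ε : ℕ → ℝ) (n : ℕ → ℕ),
      (∀ j < k, 0 < ε j) → (∀ j < k, m (ε j) ≤ n j) →
      (⋂ j ∈ Finset.range k,
        (f^[∑ i ∈ Finset.range j, n i] ⁻¹' blowupBall f g (x j) (n j) (ε j))).Nonempty

/-! ### Separated sets and Pfister–Sullivan quantities -/

/-- The number of times `0 ≤ j < n` at which the orbits of `x` and `y` are `ε`-apart. -/
def sepCount [PseudoMetricSpace X] (f : X → X) (x y : X) (n : ℕ) (ε : ℝ) : ℕ :=
  letI := Classical.decPred fun j : ℕ => ε < dist (f^[j] x) (f^[j] y)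
  ((Finset.range n).filter fun j => ε < dist (f^[j] x) (f^[j] y)).card

/-- `N(F; δ, n, ε)`: maximal cardinality of a `(δ,n,ε)`-separated subset of
`X_{n,F} = {x | E_n(x) ∈ F}`. -/
def NsepD [MetricSpace X] [MeasurableSpace X] [BorelSpace X] (f : X → X)
    (F : Set (ProbabilityMeasure X)) (δ : ℝ) (n : ℕ) (ε : ℝ) : ℕ :=
  sSup {c : ℕ | ∃ E : Finset X, (↑E : Set X) ⊆ {x | empProb f x n ∈ F} ∧
    (∀ x ∈ E, ∀ y ∈ E, x ≠ y → δ * n ≤ (sepCount f x y n ε : ℝ)) ∧ E.card = c}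

/-- `N(F; n, ε)`: maximal cardinality of an `(n,ε)`-separated subset of `X_{n,F}`. -/
def NsepP [MetricSpace X] [MeasurableSpace X] [BorelSpace X] (f : X → X)
    (F : Set (ProbabilityMeasure X)) (n : ℕ) (ε : ℝ) : ℕ :=
  sSup {c : ℕ | ∃ E : Finset X, (↑E : Set X) ⊆ {x | empProb f x n ∈ F} ∧
    (∀ x ∈ E, ∀ y ∈ E, x ≠ y → ∃ i < n, ε < dist (f^[i] x) (f^[i] y)) ∧ E.card = c}

/-- `PS-bar(μ,δ,ε) = inf_{F ∋ μ} limsup_n (1/n) ln N(F;δ,n,ε)`. -/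
def PSbar [MetricSpace X] [MeasurableSpace X] [BorelSpace X] (f : X → X)
    (μ : ProbabilityMeasure X) (δ ε : ℝ) : ℝ :=
  sInf ((fun F => limsup (fun n : ℕ => Real.log (NsepD f F δ n ε) / n) atTop) ''
    {F : Set (ProbabilityMeasure X) | F ∈ 𝓝 μ})

/-! ### Convex combinations of probability measures -/

/-- The convex hull `cov{μ_1,…,μ_m}` of finitely many probability measures. -/
def convexCombos [MeasurableSpace X] {m : ℕ} (μ : Fin m → ProbabilityMeasure X) :
    Set (ProbabilityMeasure X) :=
  {ν | ∃ t : Fin m → ℝ≥0∞, (∑ i, t i) = 1 ∧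
    (ν : Measure X) = ∑ i, t i • (μ i : Measure X)}

/-- The convex combination `θ μ + (1-θ) ν` of two probability measures (with `θ`
clamped into `[0,1]`). -/
def mixP [MeasurableSpace X] (μ ν : ProbabilityMeasure X) (θ : ℝ) : ProbabilityMeasure X :=
  ⟨ENNReal.ofReal (min (max θ 0) 1) • (μ : Measure X)
      + ENNReal.ofReal (1 - min (max θ 0) 1) • (ν : Measure X), by
    constructor
    set t := min (max θ 0) 1 with ht
    have h0 : 0 ≤ t := le_min (le_max_right θ 0) zero_le_one
    have h1 : t ≤ 1 := min_le_right _ _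
    rw [Measure.add_apply, Measure.smul_apply, Measure.smul_apply, measure_univ, measure_univ,
      smul_eq_mul, smul_eq_mul, mul_one, mul_one, ← ENNReal.ofReal_add h0 (by linarith)]
    have : t + (1 - t) = 1 := by ring
    rw [this, ENNReal.ofReal_one]⟩

/-- Condition A.3: for invariant `μ, ν` with `α μ ≠ α ν`, the map
`θ ↦ α(θμ + (1-θ)ν)` is not constant on any nondegenerate subinterval of `[0,1]`. -/
def CondA3 [MeasurableSpace X] (f : X → X) (α : ProbabilityMeasure X → ℝ) : Prop :=
  ∀ μ ∈ invSet f, ∀ ν ∈ invSet f, α μ ≠ α ν →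
    ∀ a b : ℝ, 0 ≤ a → a < b → b ≤ 1 →
      ¬ (∀ s ∈ Set.Icc a b, ∀ t ∈ Set.Icc a b, α (mixP μ ν s) = α (mixP μ ν t))

end MMD

end

open MMD MeasureTheory Filter Set Topology
open scoped ENNReal NNReal

noncomputable section

/-- `∫ φ dμ` for a probability measure `μ`. -/
noncomputable def intPhi {X : Type*} [MeasurableSpace X] (φ : X → ℝ)
    (μ : ProbabilityMeasure X) : ℝ :=
  ∫ x, φ x ∂(μ : Measure X)

/-- The level set `R_φ(a)` of the Birkhoff averages of `φ`. -/
def Rphi {X : Type*} (f : X → X) (φ : X → ℝ) (a : ℝ) : Set X :=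
  {x | Tendsto (fun n : ℕ => (∑ i ∈ Finset.range n, φ (f^[i] x)) / n) atTop (𝓝 a)}

/-- The irregular set `I_φ` of `φ`: points where the Birkhoff average does not converge. -/
def Iphi {X : Type*} (f : X → X) (φ : X → ℝ) : Set X :=
  {x | ¬ ∃ a : ℝ, Tendsto (fun n : ℕ => (∑ i ∈ Finset.range n, φ (f^[i] x)) / n) atTop (𝓝 a)}

/-- `H_φ(a,ε) = (1/|log ε|) sup_{μ ∈ M_f(X,φ,a)} inf_{diam ξ < ε} h_μ(f,ξ)`. -/
noncomputable def Hphi {X : Type*} [MetricSpace X] [MeasurableSpace X] [BorelSpace X]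
    (f : X → X) (φ : X → ℝ) (a : ℝ) (ε : ℝ) : ℝ :=
  (1 / |Real.log ε|) *
    sSup ((fun ν : ProbabilityMeasure X => infEnt (ν : Measure X) f ε) ''
      {ν | ν ∈ invSet f ∧ intPhi φ ν = a})

/-!
The Bowen entropy of `I_φ ∩ {x | C_f(X) ⊆ ω_f(x)}` at scale `ε` is at least that of `X` at scale
`7 ε`; the constant `7` disappears in `limsup h(ε) / |log ε|`, and the theorem follows by
monotonicity.

For the entropy bound let `s < h(X, 7 ε)`. For large `n` there are `exp (s n)` points whose orbit
segments of length `n` pairwise differ by more than `3 ε` at a positive proportion of times, more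
than a `g`-blowup can hide; by pigeonhole their Birkhoff sums may be taken almost equal. Divide time
into blocks of length `n`. In most blocks an arbitrary one of these points is followed. In every
`P`-th block one follows a point of low or of high Birkhoff sum, with the choice alternating along
geometrically growing stretches, so that the Birkhoff averages oscillate; such points exist for
every `n` because `I_φ` is nonempty. A sparse set of longer blocks follows segments that visit a
countable family of open sets, which forces the orbit to accumulate on the measure center. The
almost product property and compactness give a point for every sequence of choices, and the orbits
of two such points in a common Bowen ball of radius `ε` make the same choices. Pushing the uniform
measure on choices through this coding yields the bound by the mass distribution principle.
-/

namespace MMD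

/-! ### Bowen entropy at a fixed scale -/

theorem coverSum_antitone {X : Type*} (C : Set (X × ℕ)) : Antitone fun s => coverSum s C := by
  intro s t hst
  refine ENNReal.tsum_le_tsum fun p => ENNReal.ofReal_le_ofReal (Real.exp_le_exp.2 ?_)
  gcongr

section Entropy

variable {X : Type*} [PseudoMetricSpace X] {f : X → X} {Z W : Set X} {s t ε : ℝ}

theorem mB_anti (hZW : Z ⊆ W) (hst : s ≤ t) (N : ℕ) : mB f Z t N ε ≤ mB f W s N ε :=
  le_iInf₂ fun C hC => le_iInf₂ fun hN hcov =>
    iInf₂_le_of_le C hC (iInf₂_le_of_le hN (hZW.trans hcov) (coverSum_antitone C hst))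

theorem mBLim_anti (hZW : Z ⊆ W) (hst : s ≤ t) : mBLim f Z t ε ≤ mBLim f W s ε :=
  iSup_mono fun N => mB_anti hZW hst N

theorem mB_le_mBLim (N : ℕ) : mB f Z s N ε ≤ mBLim f Z s ε :=
  le_iSup (fun N => mB f Z s N ε) N

theorem one_le_coverSum_of_nonpos (hZ : Z.Nonempty) (hs : s ≤ 0) {C : Set (X × ℕ)}
    (hC : Z ⊆ ⋃ p ∈ C, bowenBall f p.1 p.2 ε) : 1 ≤ coverSum s C := by
  obtain ⟨z, hz⟩ := hZ
  obtain ⟨p, hp, -⟩ := mem_iUnion₂.1 (hC hz)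
  refine le_trans ?_ (ENNReal.le_tsum (⟨p, hp⟩ : C))
  rw [ENNReal.one_le_ofReal]
  exact Real.one_le_exp (mul_nonneg (neg_nonneg.2 hs) (Nat.cast_nonneg _))

theorem pos_of_mBLim_eq_zero (hZ : Z.Nonempty) (h : mBLim f Z s ε = 0) : 0 < s := by
  by_contra! hs
  have hone : 1 ≤ mB f Z s 0 ε :=
    le_iInf₂ fun _ _ => le_iInf₂ fun _ hC => one_le_coverSum_of_nonpos hZ hs hC
  exact one_ne_zero (le_zero_iff.1 ((hone.trans (mB_le_mBLim 0)).trans_eq h))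

theorem hB_nonneg (hZ : Z.Nonempty) (ε : ℝ) : 0 ≤ hB f Z ε :=
  Real.sInf_nonneg fun _ hs => (pos_of_mBLim_eq_zero hZ hs).le

theorem bddBelow_mBLim_eq_zero (hZ : Z.Nonempty) : BddBelow {s | mBLim f Z s ε = 0} :=
  ⟨0, fun _ hs => (pos_of_mBLim_eq_zero hZ hs).le⟩

theorem mBLim_ne_zero_of_lt_hB (hZ : Z.Nonempty) (hs : s < hB f Z ε) : mBLim f Z s ε ≠ 0 :=
  fun h => (csInf_le (bddBelow_mBLim_eq_zero hZ) h).not_gt hs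

theorem mB_le_card_mul_exp {N n : ℕ} (hNn : N ≤ n) (C : Finset X)
    (hC : ∀ x ∈ Z, ∃ c ∈ C, x ∈ bowenBall f c n ε) :
    mB f Z s N ε ≤ ENNReal.ofReal (C.card * Real.exp (-s * n)) := by
  classical
  have hlen : ∀ p ∈ C.map ⟨(·, n), Prod.mk_left_injective n⟩, p.2 = n := by simp
  refine iInf₂_le_of_le (C.map ⟨(·, n), Prod.mk_left_injective n⟩ : Finset (X × ℕ))
    (Finset.countable_toSet _) (iInf₂_le_of_le (fun p hp => hNn.trans_eq (hlen p hp).symm) ?_ ?_)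
  · intro x hx
    obtain ⟨c, hc, hxc⟩ := hC x hx
    exact mem_iUnion₂.2 ⟨(c, n), by simpa using hc, hxc⟩
  · rw [coverSum, Finset.tsum_subtype' (C.map ⟨(·, n), Prod.mk_left_injective n⟩)
      fun p : X × ℕ => ENNReal.ofReal (Real.exp (-s * p.2)), Finset.sum_map]
    simp [ENNReal.ofReal_mul]

theorem exists_card_ge_of_lt_hB [Nonempty X] (hs : s < hB f univ ε) :
    ∃ c > 0, ∀ᶠ n : ℕ in atTop, ∀ C : Finset X, (∀ x, ∃ y ∈ C, x ∈ bowenBall f y n ε) →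
      c * Real.exp (s * n) ≤ C.card := by
  have hlim := mBLim_ne_zero_of_lt_hB univ_nonempty hs
  simp only [mBLim, ne_eq, ENNReal.iSup_eq_zero, not_forall] at hlim
  obtain ⟨N, hN⟩ := hlim
  obtain ⟨c, hc, hcN⟩ := ENNReal.lt_iff_exists_nnreal_btwn.1 (pos_iff_ne_zero.2 hN)
  refine ⟨c, by exact_mod_cast hc, eventually_atTop.2 ⟨N, fun n hn C hC => ?_⟩⟩
  have hle := hcN.le.trans (mB_le_card_mul_exp (s := s) hn C fun x _ => hC x)
  rw [← ENNReal.ofReal_coe_nnreal, ENNReal.ofReal_le_ofReal_iff (by positivity)] at hle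
  calc (c : ℝ) * Real.exp (s * n) ≤ C.card * Real.exp (-s * n) * Real.exp (s * n) := by gcongr
    _ = C.card := by rw [mul_assoc, ← Real.exp_add]; simp

end Entropy

section Covers

theorem exists_finset_representatives {X κ : Type*} (code : X → κ) (S : Finset κ) :
    ∃ C : Finset X, C.card ≤ S.card ∧ ∀ x, code x ∈ S → ∃ c ∈ C, code c = code x := by
  obtain ⟨C, -, hbij⟩ := (code ⁻¹' S).exists_subset_bijOn code
  have himage : code '' (code ⁻¹' S) ⊆ S := image_preimage_subset code S
  have hfin : C.Finite := hbij.finite_iff_finite.2 (S.finite_toSet.subset himage)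
  refine ⟨hfin.toFinset, Finset.card_le_card_of_injOn code ?_ ?_, fun x hx => ?_⟩
  · exact fun x hx => himage (hbij.mapsTo (by simpa using hx))
  · simpa using hbij.injOn
  · simpa using hbij.surjOn (mem_image_of_mem code hx)

variable {X : Type*} [PseudoMetricSpace X] [CompactSpace X] {Z W : Set X} {s ε : ℝ}

theorem exists_finset_dist_lt (hε : 0 < ε) :
    ∃ (T : Finset X) (π : X → T), ∀ x : X, dist x (π x) < ε := by
  obtain ⟨T, -, hfin, hT⟩ := (isCompact_univ (X := X)).finite_cover_balls hε
  have hnear : ∀ x : X, ∃ c : hfin.toFinset, dist x c < ε := fun x => by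
    simpa using hT (mem_univ x)
  choose π hπ using hnear
  exact ⟨hfin.toFinset, π, hπ⟩

theorem exists_bowenBall_cover (f : X → X) (hε : 0 < ε) :
    ∃ N : ℕ, ∀ n : ℕ, ∃ C : Finset X, C.card ≤ N ^ n ∧ ∀ x, ∃ c ∈ C, x ∈ bowenBall f c n ε := by
  obtain ⟨T, π, hπ⟩ := exists_finset_dist_lt (X := X) (half_pos hε)
  refine ⟨T.card, fun n => ?_⟩
  obtain ⟨C, hcard, hC⟩ := exists_finset_representatives
    (fun (x : X) (i : Fin n) => π (f^[i] x)) Finset.univ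
  refine ⟨C, by simpa using hcard, fun x => ?_⟩
  obtain ⟨c, hc, hcode⟩ := hC x (Finset.mem_univ _)
  refine ⟨c, hc, fun i hi => ?_⟩
  have hi_code : π (f^[i] c) = π (f^[i] x) := congrFun hcode ⟨i, hi⟩
  calc dist (f^[i] c) (f^[i] x)
      ≤ dist (f^[i] c) (π (f^[i] c)) + dist (f^[i] x) (π (f^[i] c)) := dist_triangle_right _ _ _
    _ < ε / 2 + ε / 2 := add_lt_add (hπ _) (hi_code ▸ hπ _)
    _ = ε := add_halves ε

theorem nonempty_mBLim_eq_zero (f : X → X) (Z : Set X) (hε : 0 < ε) :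
    {s | mBLim f Z s ε = 0}.Nonempty := by
  obtain ⟨N, hcov⟩ := exists_bowenBall_cover f hε
  refine ⟨N + 1, ENNReal.iSup_eq_zero.2 fun M => ?_⟩
  have hle : ∀ n ≥ M, mB f Z (N + 1) M ε ≤ ENNReal.ofReal (Real.exp (-(n : ℝ))) := fun n hn => by
    obtain ⟨C, hcard, hC⟩ := hcov n
    refine (mB_le_card_mul_exp hn C fun x _ => hC x).trans (ENNReal.ofReal_le_ofReal ?_)
    calc C.card * Real.exp (-(N + 1 : ℝ) * n)
        ≤ Real.exp N ^ n * Real.exp (-(N + 1 : ℝ) * n) := by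
          gcongr
          calc (C.card : ℝ) ≤ (N : ℝ) ^ n := by exact_mod_cast hcard
            _ ≤ Real.exp N ^ n := by gcongr; linarith [Real.add_one_le_exp (N : ℝ)]
      _ = Real.exp (-(n : ℝ)) := by rw [← Real.exp_nat_mul, ← Real.exp_add]; ring_nf
  have hzero : Tendsto (fun n : ℕ => ENNReal.ofReal (Real.exp (-(n : ℝ)))) atTop (𝓝 0) := by
    simpa using ENNReal.tendsto_ofReal
      (Real.tendsto_exp_neg_atTop_nhds_zero.comp tendsto_natCast_atTop_atTop)
  exact le_zero_iff.1 (ge_of_tendsto hzero (eventually_atTop.2 ⟨M, hle⟩))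

theorem hB_mono (f : X → X) (hZ : Z.Nonempty) (hZW : Z ⊆ W) (hε : 0 < ε) :
    hB f Z ε ≤ hB f W ε :=
  csInf_le_csInf (bddBelow_mBLim_eq_zero hZ) (nonempty_mBLim_eq_zero f W hε)
    fun _ hs => le_zero_iff.1 ((mBLim_anti hZW le_rfl).trans_eq hs)

theorem le_hB_of_mBLim_ne_zero {f : X → X} (hε : 0 < ε) (h : mBLim f Z s ε ≠ 0) :
    s ≤ hB f Z ε := by
  refine le_csInf (nonempty_mBLim_eq_zero f Z hε) fun t ht => ?_
  by_contra! hts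
  exact h (le_zero_iff.1 ((mBLim_anti Subset.rfl hts.le).trans_eq ht))

/-! ### The mass distribution principle -/

theorem le_hB_of_measure_bowenBall_le {Ω : Type*} [MeasurableSpace Ω] (ν : Measure Ω)
    [IsProbabilityMeasure ν] {f : X → X} {z : Ω → X} (hz : ∀ ω, z ω ∈ Z) (hε : 0 < ε) {T : ℕ}
    (hball : ∀ x, ∀ t ≥ T, ν (z ⁻¹' bowenBall f x t ε) ≤ ENNReal.ofReal (Real.exp (-s * t))) :
    s ≤ hB f Z ε := by
  suffices hone : 1 ≤ mB f Z s T ε from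
    le_hB_of_mBLim_ne_zero hε (one_pos.trans_le (hone.trans (mB_le_mBLim T))).ne'
  refine le_iInf₂ fun C hC => le_iInf₂ fun hT hcov => ?_
  have : Countable C := hC.to_subtype
  calc 1 = ν univ := measure_univ.symm
    _ ≤ ν (⋃ p : C, z ⁻¹' bowenBall f p.1.1 p.1.2 ε) := measure_mono fun ω _ => by
        simpa using hcov (hz ω)
    _ ≤ ∑' p : C, ν (z ⁻¹' bowenBall f p.1.1 p.1.2 ε) := measure_iUnion_le _
    _ ≤ coverSum s C := ENNReal.tsum_le_tsum fun p => hball _ _ (hT p p.2)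

theorem infinitePi_uniformOn_pi_singleton {ι : Type*} [Fintype ι] [Nonempty ι] [MeasurableSpace ι]
    [MeasurableSingletonClass ι] (I : Finset ℕ) (c : ℕ → ι) :
    Measure.infinitePi (fun _ : ℕ => ProbabilityTheory.uniformOn (univ : Set ι))
      ((I : Set ℕ).pi fun i => {c i}) = ((Fintype.card ι : ℝ≥0∞) ^ I.card)⁻¹ := by
  have : IsProbabilityMeasure (ProbabilityTheory.uniformOn (univ : Set ι)) :=
    ProbabilityTheory.isProbabilityMeasure_uniformOn finite_univ univ_nonempty
  rw [Measure.infinitePi_pi _ fun i _ => MeasurableSet.singleton _]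
  simp [ProbabilityTheory.uniformOn_univ, ENNReal.inv_pow]

/-- The mass distribution principle for the image under `z` of the uniform Bernoulli measure. -/
theorem le_hB_of_coding {ι : Type*} [Fintype ι] [Nonempty ι] {f : X → X} (hε : 0 < ε)
    {z : (ℕ → ι) → X} (hz : ∀ c, z c ∈ Z)
    (hcode : ∀ᶠ t : ℕ in atTop, ∃ I : Finset ℕ, Real.exp (s * t) ≤ (Fintype.card ι : ℝ) ^ I.card ∧
      ∀ x c c', z c ∈ bowenBall f x t ε → z c' ∈ bowenBall f x t ε → ∀ i ∈ I, c i = c' i) :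
    s ≤ hB f Z ε := by
  let : MeasurableSpace ι := ⊤
  have : MeasurableSingletonClass ι := ⟨fun _ => trivial⟩
  have : IsProbabilityMeasure (ProbabilityTheory.uniformOn (univ : Set ι)) :=
    ProbabilityTheory.isProbabilityMeasure_uniformOn finite_univ univ_nonempty
  obtain ⟨T, hT⟩ := eventually_atTop.1 hcode
  refine le_hB_of_measure_bowenBall_le
    (Measure.infinitePi fun _ : ℕ => ProbabilityTheory.uniformOn (univ : Set ι)) hz hε (T := T)
    fun x t ht => ?_
  obtain ⟨I, hcard, hagree⟩ := hT t ht
  rcases (z ⁻¹' bowenBall f x t ε).eq_empty_or_nonempty with hempty | ⟨c₀, hc₀⟩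
  · simp [hempty]
  calc _ ≤ _ := measure_mono (t := (I : Set ℕ).pi fun i => {c₀ i})
        fun c hc i hi => hagree x c c₀ hc hc₀ i hi
    _ = ((Fintype.card ι : ℝ≥0∞) ^ I.card)⁻¹ := infinitePi_uniformOn_pi_singleton I c₀
    _ ≤ (ENNReal.ofReal (Real.exp (s * t)))⁻¹ := by
        rw [ENNReal.inv_le_inv, ← ENNReal.ofReal_natCast, ← ENNReal.ofReal_pow (by positivity)]
        exact ENNReal.ofReal_le_ofReal hcard
    _ = ENNReal.ofReal (Real.exp (-s * t)) := by
        rw [← ENNReal.ofReal_inv_of_pos (Real.exp_pos _), ← Real.exp_neg, neg_mul]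

end Covers

/-! ### Metric mean dimension and rescaling -/

section Rescaling

theorem eventually_div_abs_log_le_of_rescale {v w : ℝ → ℝ} {c a b : ℝ} (hc : 0 < c)
    (hv : ∀ ε > 0, 0 ≤ v ε) (hwv : ∀ ε > 0, w (c * ε) ≤ v ε)
    (ha : ∀ᶠ ε in 𝓝[>] (0 : ℝ), v ε / |Real.log ε| ≤ a) (hab : a < b) :
    ∀ᶠ ε in 𝓝[>] (0 : ℝ), w ε / |Real.log ε| ≤ b := by
  have hscale : Tendsto (fun ε : ℝ => ε / c) (𝓝[>] 0) (𝓝[>] 0) := by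
    refine tendsto_nhdsWithin_iff.2 ⟨?_, ?_⟩
    · exact ((continuous_id.div_const c).tendsto' _ _ (zero_div c)).mono_left nhdsWithin_le_nhds
    · filter_upwards [self_mem_nhdsWithin] with ε hε using div_pos hε hc
  have hlog : ∀ᶠ ε : ℝ in 𝓝[>] 0, Real.log ε ≤ -(1 + |Real.log c| + a * |Real.log c| / (b - a)) :=
    Real.tendsto_log_nhdsGT_zero.eventually (eventually_le_atBot _)
  filter_upwards [self_mem_nhdsWithin, hscale.eventually ha, hlog] with ε (hε : 0 < ε) hvε hlogε
  have hvnn := hv (ε / c) (div_pos hε hc)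
  have ha0 : 0 ≤ a := (div_nonneg hvnn (abs_nonneg _)).trans hvε
  have hba : 0 < b - a := sub_pos.2 hab
  have hslack : 0 ≤ a * |Real.log c| / (b - a) := by positivity
  have habs := abs_le.1 (le_refl |Real.log c|)
  rw [Real.log_div hε.ne' hc.ne', abs_of_neg (by linarith), div_le_iff₀ (by linarith)] at hvε
  have hwε := hwv (ε / c) (div_pos hε hc)
  rw [mul_div_cancel₀ _ hc.ne'] at hwε
  have hgap : a * |Real.log c| ≤ (b - a) * (-Real.log ε) := by
    rw [← div_le_iff₀' hba]
    linarith [abs_nonneg (Real.log c)]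
  rw [abs_of_neg (by linarith [abs_nonneg (Real.log c)]),
    div_le_iff₀ (by linarith [abs_nonneg (Real.log c)])]
  nlinarith

theorem limsup_div_abs_log_eq_of_rescale {v w : ℝ → ℝ} {c : ℝ} (hc : 0 < c)
    (hv : ∀ ε > 0, 0 ≤ v ε) (hvw : ∀ ε > 0, v ε ≤ w ε) (hwv : ∀ ε > 0, w (c * ε) ≤ v ε) :
    limsup (fun ε => v ε / |Real.log ε|) (𝓝[>] 0) =
      limsup (fun ε => w ε / |Real.log ε|) (𝓝[>] 0) := by
  rw [limsup_eq, limsup_eq]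
  set A := {a | ∀ᶠ ε in 𝓝[>] (0 : ℝ), v ε / |Real.log ε| ≤ a}
  set B := {a | ∀ᶠ ε in 𝓝[>] (0 : ℝ), w ε / |Real.log ε| ≤ a}
  have hBA : B ⊆ A := fun a (ha : ∀ᶠ ε in 𝓝[>] (0 : ℝ), w ε / |Real.log ε| ≤ a) => by
    filter_upwards [self_mem_nhdsWithin, ha] with ε hε hwε
    exact (div_le_div_of_nonneg_right (hvw ε hε) (abs_nonneg _)).trans hwε
  have hA : BddBelow A := ⟨0, fun a (ha : ∀ᶠ ε in 𝓝[>] (0 : ℝ), v ε / |Real.log ε| ≤ a) => by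
    obtain ⟨ε, hε, hvε⟩ := (eventually_mem_nhdsWithin.and ha).exists
    exact (div_nonneg (hv ε hε) (abs_nonneg _)).trans hvε⟩
  have hAB : ∀ a ∈ A, ∀ b > a, b ∈ B := fun a ha b hab =>
    eventually_div_abs_log_le_of_rescale hc hv hwv ha hab
  rcases A.eq_empty_or_nonempty with hempty | ⟨a₀, ha₀⟩
  · rw [hempty, subset_empty_iff.1 (hBA.trans_eq hempty)]
  refine le_antisymm (csInf_le_csInf hA ⟨a₀ + 1, hAB a₀ ha₀ _ (lt_add_one a₀)⟩ hBA)
    (le_csInf ⟨a₀, ha₀⟩ fun a ha => le_of_forall_gt_imp_ge_of_dense fun b hab => ?_)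
  exact csInf_le (hA.mono hBA) (hAB a ha b hab)

theorem mdimUpper_eq_of_hB_rescale_le {X : Type*} [PseudoMetricSpace X] [CompactSpace X]
    {f : X → X} {Z W : Set X} {c : ℝ} (hc : 0 < c) (hZ : Z.Nonempty) (hZW : Z ⊆ W)
    (h : ∀ ε > 0, hB f W (c * ε) ≤ hB f Z ε) : mdimUpper f Z = mdimUpper f W :=
  limsup_div_abs_log_eq_of_rescale hc (fun ε _ => hB_nonneg hZ ε) (fun _ hε => hB_mono f hZ hZW hε)
    h

end Rescaling

/-! ### Orbit segments separated at a positive proportion of times -/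

section Counting

theorem card_filter_isSome_mul_exp_le {ι α : Type*} [Fintype ι] [DecidableEq ι] [Fintype α]
    {Λ : ℝ} (hΛ : 0 ≤ Λ) (r : ℝ) :
    (Finset.card {ψ : ι → Option α | (Finset.card {i | (ψ i).isSome} : ℝ) < r} : ℝ) *
      Real.exp (-Λ * r) ≤ (1 + Fintype.card α * Real.exp (-Λ)) ^ Fintype.card ι := by
  let weight : Option α → ℝ := fun o => if o.isSome then Real.exp (-Λ) else 1
  have hweight : ∀ o, 0 ≤ weight o := fun o => by
    simp only [weight]
    split_ifs <;> positivity
  have hprod : ∀ ψ : ι → Option α,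
      ∏ i, weight (ψ i) = Real.exp (-Λ * Finset.card {i | (ψ i).isSome}) := fun ψ => by
    simp [weight, Finset.prod_ite, ← Real.exp_nat_mul, mul_comm]
  have htotal : ∑ ψ : ι → Option α, ∏ i, weight (ψ i) =
      (1 + Fintype.card α * Real.exp (-Λ)) ^ Fintype.card ι := by
    rw [← Fintype.piFinset_univ, ← Finset.prod_univ_sum]
    simp [weight, Fintype.sum_option]
  rw [← nsmul_eq_mul, ← Finset.sum_const, ← htotal]
  refine (Finset.sum_le_sum fun ψ hψ => ?_).trans (Finset.sum_le_univ_sum_of_nonneg fun ψ =>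
    Finset.prod_nonneg fun i _ => hweight _)
  rw [hprod, Real.exp_le_exp]
  exact mul_le_mul_of_nonpos_left (Finset.mem_filter.1 hψ).2.le (neg_nonpos.2 hΛ)

theorem exists_card_filter_isSome_le_exp (α : Type*) [Fintype α] {γ : ℝ} (hγ : 0 < γ) :
    ∃ δ > 0, ∀ n : ℕ,
      (Finset.card {ψ : Fin n → Option α | (Finset.card {i | (ψ i).isSome} : ℝ) < δ * n} : ℝ) ≤
        Real.exp (γ * n) := by
  obtain ⟨Λ, hΛ, hsmall⟩ : ∃ Λ > 0, Fintype.card α * Real.exp (-Λ) ≤ γ / 2 := by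
    have hlim := Real.tendsto_exp_neg_atTop_nhds_zero.const_mul (Fintype.card α : ℝ)
    rw [mul_zero] at hlim
    exact ((eventually_gt_atTop 0).and (hlim.eventually (ge_mem_nhds (half_pos hγ)))).exists
  refine ⟨γ / (2 * Λ), by positivity, fun n => ?_⟩
  have hchernoff := card_filter_isSome_mul_exp_le (ι := Fin n) (α := α) hΛ.le (γ / (2 * Λ) * n)
  have hexponent : -Λ * (γ / (2 * Λ) * n) = -(γ / 2 * n) := by field_simp
  rw [hexponent, Real.exp_neg, ← div_eq_mul_inv, div_le_iff₀ (Real.exp_pos _),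
    Fintype.card_fin] at hchernoff
  calc _ ≤ _ := hchernoff
    _ ≤ Real.exp (γ / 2) ^ n * Real.exp (γ / 2 * n) := by
        gcongr
        linarith [Real.add_one_le_exp (γ / 2)]
    _ = Real.exp (γ * n) := by rw [← Real.exp_nat_mul, ← Real.exp_add]; ring_nf

theorem exists_pairwise_not_card_ge {α : Type*} {r : α → α → Prop} (hrefl : ∀ x, r x x)
    (hsymm : ∀ x y, r x y → r y x) {L : ℝ}
    (hnet : ∀ F : Finset α, (∀ y, ∃ x ∈ F, r x y) → L ≤ F.card) :
    ∃ F : Finset α, (F : Set α).Pairwise (fun x y => ¬ r x y) ∧ L ≤ F.card := by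
  classical
  by_contra! hsmall
  have hlarge : ∀ k : ℕ, ∃ F : Finset α, (F : Set α).Pairwise (fun x y => ¬ r x y) ∧
      F.card = k := fun k => by
    induction k with
    | zero => exact ⟨∅, by simp, rfl⟩
    | succ k ih =>
      obtain ⟨F, hF, rfl⟩ := ih
      obtain ⟨y, hy⟩ : ∃ y, ∀ x ∈ F, ¬ r x y := by
        by_contra! h
        exact (hsmall F hF).not_ge (hnet F h)
      have hyF : y ∉ F := fun h => hy y h (hrefl y)
      refine ⟨insert y F, ?_, Finset.card_insert_of_notMem hyF⟩
      rw [Finset.coe_insert]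
      exact hF.insert fun x hx _ => ⟨fun h => hy x hx (hsymm _ _ h), hy x hx⟩
  obtain ⟨k, hk⟩ := exists_nat_gt L
  obtain ⟨F, hF, rfl⟩ := hlarge k
  exact hk.not_gt (hsmall F hF)

theorem exists_concentrated_subset {α : Type*} (B : ℝ) {η : ℝ} (hη : 0 < η) :
    ∃ R : ℕ, 0 < R ∧ ∀ (F : Finset α) (h : α → ℝ), (∀ x, |h x| ≤ B) →
      ∃ F' ⊆ F, F.card ≤ R * F'.card ∧ ∃ a, ∀ x ∈ F', |h x - a| ≤ η := by
  classical
  obtain ⟨T, π, hπ⟩ := exists_finset_dist_lt (X := Icc (-B) B) hη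
  refine ⟨T.card + 1, Nat.succ_pos _, fun F h hh => ?_⟩
  let cell : α → T := fun x => π ⟨h x, abs_le.1 (hh x)⟩
  rcases F.eq_empty_or_nonempty with rfl | ⟨x₀, _⟩
  · exact ⟨∅, Subset.rfl, by simp, 0, by simp⟩
  have hT : (0 : ℝ) < T.card := Nat.cast_pos.2 (Finset.card_pos.2 ⟨_, (cell x₀).2⟩)
  obtain ⟨k, -, hk⟩ := Finset.exists_le_card_fiber_of_nsmul_le_card_of_maps_to
    (b := (F.card / T.card : ℝ)) (fun x (_ : x ∈ F) => Finset.mem_univ (cell x)) ⟨cell x₀, by simp⟩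
    (by simp [mul_div_cancel₀ _ hT.ne'])
  rw [div_le_iff₀' hT] at hk
  refine ⟨F.filter (cell · = k), Finset.filter_subset _ _,
    (show F.card ≤ T.card * _ by exact_mod_cast hk).trans (by gcongr; simp),
    (k : Icc (-B) B), fun x hx => ?_⟩
  rw [← (Finset.mem_filter.1 hx).2]
  exact (hπ ⟨h x, abs_le.1 (hh x)⟩).le

theorem eventually_mul_exp_le_exp (C : ℝ) {s t : ℝ} (hst : s < t) :
    ∀ᶠ n : ℕ in atTop, C * Real.exp (s * n) ≤ Real.exp (t * n) := by
  have hlim : Tendsto (fun n : ℕ => Real.exp ((t - s) * n)) atTop atTop :=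
    Real.tendsto_exp_atTop.comp
      (tendsto_natCast_atTop_atTop.const_mul_atTop (sub_pos.2 hst))
  filter_upwards [hlim.eventually_ge_atTop C] with n hn
  calc C * Real.exp (s * n) ≤ Real.exp ((t - s) * n) * Real.exp (s * n) := by gcongr
    _ = Real.exp (t * n) := by rw [← Real.exp_add]; ring_nf

theorem abs_birkhoffSum_le {α : Type*} {f : α → α} {φ : α → ℝ} {B : ℝ} (hφB : ∀ x, |φ x| ≤ B)
    (n : ℕ) (x : α) : |birkhoffSum f φ n x| ≤ n * B := by
  calc |birkhoffSum f φ n x| ≤ ∑ i ∈ Finset.range n, |φ (f^[i] x)| := Finset.abs_sum_le_sum_abs _ _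
    _ ≤ n * B := by simpa using Finset.sum_le_sum fun i (_ : i ∈ Finset.range n) => hφB (f^[i] x)

end Counting

section Separation

variable {X : Type*} [PseudoMetricSpace X] {f : X → X} {s ε ρ : ℝ}

theorem sepCount_comm (x y : X) (n : ℕ) : sepCount f x y n ε = sepCount f y x n ε := by
  simp only [sepCount, dist_comm]

theorem sepCount_self (hε : 0 ≤ ε) (x : X) (n : ℕ) : sepCount f x x n ε = 0 := by
  simp [sepCount, hε.not_gt]

theorem card_fin_filter_eq_sepCount (x y : X) (n : ℕ) :
    Finset.card {i : Fin n | ε < dist (f^[i] x) (f^[i] y)} = sepCount f x y n ε := by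
  rw [sepCount, Finset.card_filter, Finset.card_filter, Finset.sum_range]

theorem le_card_mul_of_bowenBall_cover {n : ℕ} {L Q δ : ℝ}
    (hL : ∀ C : Finset X, (∀ x, ∃ c ∈ C, x ∈ bowenBall f c n ε) → L ≤ C.card)
    (hcover : ∀ x : X, ∃ C : Finset X, (C.card : ℝ) ≤ Q ∧
      ∀ y, (sepCount f x y n ρ : ℝ) < δ * n → ∃ c ∈ C, y ∈ bowenBall f c n ε)
    (F : Finset X) (hF : ∀ y, ∃ x ∈ F, (sepCount f x y n ρ : ℝ) < δ * n) : L ≤ F.card * Q := by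
  classical
  choose C hcard hC using hcover
  calc L ≤ (F.biUnion C).card := hL _ fun y => by
        obtain ⟨x, hx, hxy⟩ := hF y
        obtain ⟨c, hc, hyc⟩ := hC x y hxy
        exact ⟨c, Finset.mem_biUnion.2 ⟨x, hx, hc⟩, hyc⟩
    _ ≤ ∑ x ∈ F, ((C x).card : ℝ) := mod_cast Finset.card_biUnion_le
    _ ≤ F.card * Q := by simpa using Finset.sum_le_sum fun x (_ : x ∈ F) => hcard x

variable [CompactSpace X]

theorem exists_bowenBall_cover_of_sepCount_lt {γ : ℝ} (hρ : 0 < ρ) (hρε : 2 * ρ < ε) (hγ : 0 < γ) :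
    ∃ δ > 0, ∀ (n : ℕ) (x : X), ∃ C : Finset X, (C.card : ℝ) ≤ Real.exp (γ * n) ∧
      ∀ y, (sepCount f x y n ρ : ℝ) < δ * n → ∃ c ∈ C, y ∈ bowenBall f c n ε := by
  obtain ⟨T, π, hπ⟩ := exists_finset_dist_lt (X := X) hρ
  obtain ⟨δ, hδ, hcount⟩ := exists_card_filter_isSome_le_exp T hγ
  refine ⟨δ, hδ, fun n x => ?_⟩
  -- Away from the few times where the orbits of `x` and `y` are apart, `x` itself locates `y`.
  let code : X → Fin n → Option T := fun y i =>
    if ρ < dist (f^[i] x) (f^[i] y) then some (π (f^[i] y)) else none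
  have hsupport : ∀ y, Finset.card {i | (code y i).isSome} = sepCount f x y n ρ := fun y => by
    rw [← card_fin_filter_eq_sepCount]
    congr! with i
    simp only [code]
    split_ifs with h <;> simp [h]
  obtain ⟨C, hcard, hC⟩ := exists_finset_representatives code
    {ψ | (Finset.card {i | (ψ i).isSome} : ℝ) < δ * n}
  refine ⟨C, (Nat.cast_le.2 hcard).trans (hcount n), fun y hy => ?_⟩
  obtain ⟨c, hc, hcode⟩ := hC y (by simpa [hsupport] using hy)
  refine ⟨c, hc, fun i hi => ?_⟩
  have hi_code : code c ⟨i, hi⟩ = code y ⟨i, hi⟩ := congrFun hcode _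
  simp only [code] at hi_code
  split_ifs at hi_code with hcfar hyfar hyfar
  · have hcy : π (f^[i] c) = π (f^[i] y) := Option.some.inj hi_code
    have htri := dist_triangle_right (f^[i] c) (f^[i] y) (π (f^[i] c))
    linarith [hπ (f^[i] c), hcy ▸ hπ (f^[i] y)]
  · linarith [dist_triangle_left (f^[i] c) (f^[i] y) (f^[i] x)]

theorem exists_pairwise_le_sepCount_of_lt_hB [Nonempty X] (hs : s < hB f univ ε) (hρ : 0 < ρ)
    (hρε : 2 * ρ < ε) :
    ∃ δ > (0 : ℝ), ∀ᶠ n : ℕ in atTop, ∃ F : Finset X, Real.exp (s * n) ≤ F.card ∧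
      (F : Set X).Pairwise fun x y => δ * n ≤ sepCount f x y n ρ := by
  obtain ⟨t, hst, ht⟩ := exists_between hs
  obtain ⟨u, hsu, hut⟩ := exists_between hst
  obtain ⟨δ, hδ, hham⟩ := exists_bowenBall_cover_of_sepCount_lt (f := f) hρ hρε (sub_pos.2 hut)
  obtain ⟨c, hc, hcover⟩ := exists_card_ge_of_lt_hB ht
  refine ⟨δ, hδ, ?_⟩
  filter_upwards [hcover, eventually_mul_exp_le_exp c⁻¹ hsu, eventually_gt_atTop 0]
    with n hcover_n hexp hn
  have hnet : ∀ F : Finset X, (∀ y, ∃ x ∈ F, (sepCount f x y n ρ : ℝ) < δ * n) →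
      c * Real.exp (u * n) ≤ F.card := fun F hF => by
    refine le_of_mul_le_mul_right ?_ (Real.exp_pos ((t - u) * n))
    calc c * Real.exp (u * n) * Real.exp ((t - u) * n) = c * Real.exp (t * n) := by
          rw [mul_assoc, ← Real.exp_add]; ring_nf
      _ ≤ F.card * Real.exp ((t - u) * n) :=
          le_card_mul_of_bowenBall_cover hcover_n (hham n) F hF
  obtain ⟨F, hF, hFcard⟩ := exists_pairwise_not_card_ge
    (fun x => by simp only [sepCount_self hρ.le, Nat.cast_zero]; positivity)
    (fun x y h => by rwa [sepCount_comm]) hnet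
  exact ⟨F, ((inv_mul_le_iff₀ hc).1 hexp).trans hFcard, hF.imp fun x y h => not_lt.1 h⟩

theorem exists_pairwise_le_sepCount_birkhoffSum_close [Nonempty X] {φ : X → ℝ} {B η : ℝ}
    (hφB : ∀ x, |φ x| ≤ B) (hη : 0 < η) (hs : s < hB f univ ε) (hρ : 0 < ρ) (hρε : 2 * ρ < ε) :
    ∃ δ > (0 : ℝ), ∀ᶠ n : ℕ in atTop, ∃ F : Finset X, Real.exp (s * n) ≤ F.card ∧
      (F : Set X).Pairwise (fun x y => δ * n ≤ sepCount f x y n ρ) ∧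
      ∃ a, ∀ x ∈ F, |birkhoffSum f φ n x - a| ≤ n * η := by
  obtain ⟨t, hst, ht⟩ := exists_between hs
  obtain ⟨δ, hδ, hsep⟩ := exists_pairwise_le_sepCount_of_lt_hB ht hρ hρε
  obtain ⟨R, hR, hconc⟩ := exists_concentrated_subset (α := X) B hη
  refine ⟨δ, hδ, ?_⟩
  filter_upwards [hsep, eventually_mul_exp_le_exp R hst, eventually_gt_atTop 0]
    with n ⟨F, hcard, hF⟩ hexp hn
  have hn' : (0 : ℝ) < n := Nat.cast_pos.2 hn
  obtain ⟨F', hF'F, hcard', a, ha⟩ := hconc F (fun x => birkhoffSum f φ n x / n) fun x => by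
    rw [abs_div, Nat.abs_cast, div_le_iff₀' hn']
    exact abs_birkhoffSum_le hφB n x
  refine ⟨F', ?_, hF.mono hF'F, n * a, fun x hx => ?_⟩
  · refine le_of_mul_le_mul_left (hexp.trans (hcard.trans ?_)) (Nat.cast_pos.2 hR)
    exact_mod_cast hcard'
  · calc |birkhoffSum f φ n x - n * a| = n * |birkhoffSum f φ n x / n - a| := by
          rw [← abs_of_pos hn', ← abs_mul, abs_of_pos hn', mul_sub, mul_div_cancel₀ _ hn'.ne']
      _ ≤ n * η := by gcongr; exact ha x hx

end Separation

/-! ### Birkhoff sums of irregular points and of shadowing orbits -/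

section BirkhoffSums

variable {X : Type*} {f : X → X} {φ : X → ℝ} {B : ℝ}

theorem le_birkhoffSum_of_forall_le (hφB : ∀ x, |φ x| ≤ B) {n : ℕ} (hn : 0 < n) {α : ℝ}
    (hα : ∀ y, n * α ≤ birkhoffSum f φ n y) (p : ℕ) (x : X) :
    α * p - n * (B + |α|) ≤ birkhoffSum f φ p x := by
  have hmultiple : ∀ q : ℕ, (n * q : ℝ) * α ≤ birkhoffSum f φ (n * q) x := fun q => by
    induction q with
    | zero => simp
    | succ q ih =>
      rw [Nat.mul_succ, birkhoffSum_add]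
      push_cast
      linarith [hα (f^[n * q] x)]
  have hsplit : birkhoffSum f φ p x = birkhoffSum f φ (n * (p / n)) x +
      birkhoffSum f φ (p % n) (f^[n * (p / n)] x) := by
    rw [← birkhoffSum_add, Nat.div_add_mod]
  have hp : (p : ℝ) = n * (p / n : ℕ) + (p % n : ℕ) := by exact_mod_cast (Nat.div_add_mod p n).symm
  have hremainder : ((p % n : ℕ) : ℝ) * (B + |α|) ≤ n * (B + |α|) := by
    have hB0 : 0 ≤ B := (abs_nonneg _).trans (hφB x)
    gcongr
    exact (Nat.mod_lt p hn).le
  have hαremainder : ((p % n : ℕ) : ℝ) * α ≤ (p % n : ℕ) * |α| := by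
    gcongr
    exact le_abs_self α
  have hfirst := hmultiple (p / n)
  have hsecond := neg_le_of_abs_le (abs_birkhoffSum_le (f := f) hφB (p % n) (f^[n * (p / n)] x))
  rw [hsplit, hp]
  linarith

theorem exists_birkhoffSum_le_of_frequently_lt (hφB : ∀ x, |φ x| ≤ B) {x : X} {α' α : ℝ}
    (hα : α' < α) (hfreq : ∃ᶠ p : ℕ in atTop, birkhoffSum f φ p x / p < α') {n : ℕ} (hn : 0 < n) :
    ∃ y, birkhoffSum f φ n y ≤ n * α := by
  by_contra! hcon
  have hlarge : ∀ᶠ p : ℕ in atTop, n * (B + |α|) / (α - α') < p :=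
    tendsto_natCast_atTop_atTop.eventually (eventually_gt_atTop _)
  obtain ⟨p, hlt, hp, hp0⟩ := (hfreq.and_eventually (hlarge.and (eventually_gt_atTop 0))).exists
  rw [div_lt_iff₀ (by positivity)] at hlt
  rw [div_lt_iff₀ (by linarith)] at hp
  linarith [le_birkhoffSum_of_forall_le hφB hn (fun y => (hcon y).le) p x]

theorem exists_lt_forall_exists_birkhoffSum_le_ge (hφB : ∀ x, |φ x| ≤ B)
    (hne : (Iphi f φ).Nonempty) :
    ∃ α β : ℝ, α < β ∧ ∀ n : ℕ, 0 < n →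
      (∃ y, birkhoffSum f φ n y ≤ n * α) ∧ ∃ y, n * β ≤ birkhoffSum f φ n y := by
  obtain ⟨x, hx⟩ := hne
  let A : ℕ → ℝ := fun p => birkhoffSum f φ p x / p
  have hA : ∀ p, |A p| ≤ B := fun p => by
    rw [abs_div, Nat.abs_cast]
    exact div_le_of_le_mul₀ p.cast_nonneg ((abs_nonneg _).trans (hφB x))
      ((abs_birkhoffSum_le hφB p x).trans_eq (mul_comm _ _))
  have hAle : IsBoundedUnder (· ≤ ·) atTop A := isBoundedUnder_of ⟨B, fun p => (abs_le.1 (hA p)).2⟩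
  have hAge : IsBoundedUnder (· ≥ ·) atTop A := isBoundedUnder_of ⟨-B, fun p => (abs_le.1 (hA p)).1⟩
  have hlt : liminf A atTop < limsup A atTop := by
    by_contra! hle
    exact hx ⟨_, tendsto_of_le_liminf_of_limsup_le le_rfl hle hAle hAge⟩
  obtain ⟨α', hα', h⟩ := exists_between hlt
  obtain ⟨α, hα, h⟩ := exists_between h
  obtain ⟨β, hβ, h⟩ := exists_between h
  obtain ⟨β', hβ', h⟩ := exists_between h
  have hlow : ∃ᶠ p in atTop, A p < α' := frequently_lt_of_liminf_lt hAle.isCoboundedUnder_ge hα'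
  have hhigh : ∃ᶠ p in atTop, β' < A p := frequently_lt_of_lt_limsup hAge.isCoboundedUnder_le h
  refine ⟨α, β, hβ, fun n hn => ⟨exists_birkhoffSum_le_of_frequently_lt hφB hα hlow hn, ?_⟩⟩
  obtain ⟨y, hy⟩ := exists_birkhoffSum_le_of_frequently_lt (f := f) (φ := -φ) (x := x) (by simpa)
    (neg_lt_neg hβ') (hhigh.mono fun p hp => by
      rw [birkhoffSum_neg, neg_div]
      exact neg_lt_neg hp) hn
  rw [birkhoffSum_neg] at hy
  exact ⟨y, by linarith⟩

end BirkhoffSums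

section Tracing

variable {X : Type*} [PseudoMetricSpace X] {f : X → X} {g : ℕ → ℕ} {x z : X} {n : ℕ}
  {δ : ℝ}

theorem mem_blowupBall_iff_sepCount_le : z ∈ blowupBall f g x n δ ↔ sepCount f x z n δ ≤ g n := by
  let _ := Classical.decEq ℕ
  let _ := Classical.decPred fun j => δ < dist (f^[j] x) (f^[j] z)
  constructor
  · rintro ⟨Λ, -, hcard, hdist⟩
    refine (Finset.card_le_card fun j hj => ?_).trans hcard
    rw [Finset.mem_filter] at hj
    exact Finset.mem_sdiff.2 ⟨hj.1, fun hjΛ => (hdist j hjΛ).not_gt hj.2⟩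
  · intro hcard
    refine ⟨{j ∈ Finset.range n | ¬ δ < dist (f^[j] x) (f^[j] z)}, Finset.filter_subset _ _, ?_,
      fun j hj => not_lt.1 (Finset.mem_filter.1 hj).2⟩
    rwa [← Finset.filter_not, Finset.filter_congr fun j _ => not_not]

theorem abs_birkhoffSum_sub_le_of_mem_blowupBall {φ : X → ℝ} {B η : ℝ} (hφB : ∀ x, |φ x| ≤ B)
    (hη : 0 ≤ η) (hφη : ∀ x y, dist x y ≤ δ → |φ x - φ y| ≤ η) (hz : z ∈ blowupBall f g x n δ) :
    |birkhoffSum f φ n x - birkhoffSum f φ n z| ≤ n * η + g n * (2 * B) := by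
  classical
  have hB0 : 0 ≤ B := (abs_nonneg _).trans (hφB x)
  have hterm : ∀ j, |φ (f^[j] x) - φ (f^[j] z)| ≤
      η + if δ < dist (f^[j] x) (f^[j] z) then 2 * B else 0 := fun j => by
    split_ifs with hfar
    · linarith [abs_sub (φ (f^[j] x)) (φ (f^[j] z)), hφB (f^[j] x), hφB (f^[j] z)]
    · simpa using hφη _ _ (not_lt.1 hfar)
  calc |birkhoffSum f φ n x - birkhoffSum f φ n z|
      ≤ ∑ j ∈ Finset.range n, |φ (f^[j] x) - φ (f^[j] z)| := by
        simpa only [birkhoffSum, ← Finset.sum_sub_distrib] using Finset.abs_sum_le_sum_abs _ _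
    _ ≤ n * η + sepCount f x z n δ * (2 * B) := by
        refine (Finset.sum_le_sum fun j _ => hterm j).trans_eq ?_
        rw [Finset.sum_add_distrib, ← Finset.sum_filter, Finset.sum_const, Finset.sum_const,
          Finset.card_range, nsmul_eq_mul, nsmul_eq_mul, sepCount]
    _ ≤ n * η + g n * (2 * B) := by
        gcongr
        exact mem_blowupBall_iff_sepCount_le.1 hz

theorem eventually_mul_lt_mul_of_tendsto_div
    (hg : Tendsto (fun n : ℕ => (g n : ℝ) / n) atTop (𝓝 0)) (K : ℝ) {κ : ℝ} (hκ : 0 < κ) :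
    ∀ᶠ n : ℕ in atTop, g n * K < κ * n := by
  have hlim := hg.mul_const K
  rw [zero_mul] at hlim
  filter_upwards [hlim.eventually_lt_const hκ, eventually_gt_atTop 0] with n hn hn0
  rwa [div_mul_eq_mul_div, div_lt_iff₀ (by positivity)] at hn

theorem exists_eventually_abs_birkhoffSum_sub_le [CompactSpace X] {φ : X → ℝ} (hφ : Continuous φ)
    (hg : Tendsto (fun n : ℕ => (g n : ℝ) / n) atTop (𝓝 0)) {η ε : ℝ} (hη : 0 < η) (hε : 0 < ε) :
    ∃ δ > 0, δ ≤ ε ∧ ∀ᶠ n : ℕ in atTop, ∀ x, ∀ z ∈ blowupBall f g x n δ,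
      |birkhoffSum f φ n x - birkhoffSum f φ n z| ≤ n * η := by
  obtain ⟨B, hφB⟩ := isCompact_univ.exists_bound_of_continuousOn hφ.continuousOn
  obtain ⟨δ, hδ, hunif⟩ := Metric.uniformContinuous_iff_le.1
    (CompactSpace.uniformContinuous_of_continuous hφ) (η / 2) (half_pos hη)
  refine ⟨min δ ε, lt_min hδ hε, min_le_right _ _, ?_⟩
  filter_upwards [eventually_mul_lt_mul_of_tendsto_div hg (2 * B) (half_pos hη)] with n hn x z hz
  have htrace := abs_birkhoffSum_sub_le_of_mem_blowupBall (fun x => hφB x (mem_univ x))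
    (half_pos hη).le (fun x y hxy => hunif (hxy.trans (min_le_left _ _))) hz
  linarith

end Tracing

section Irregularity

open Asymptotics

/-- The start of the `j`-th block when the `i`-th block has length `n * (1 + e i)`. -/
def blockStart (n : ℕ) (e : ℕ → ℕ) (j : ℕ) : ℕ :=
  ∑ i ∈ Finset.range j, n * (1 + e i)

/-- The sequence `e` has partial sums `o(j)`. -/
def IsSparse (e : ℕ → ℕ) : Prop :=
  (fun j : ℕ => ((∑ i ∈ Finset.range j, e i : ℕ) : ℝ)) =o[atTop] fun j => (j : ℝ)

theorem blockStart_eq (n : ℕ) (e : ℕ → ℕ) (j : ℕ) :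
    blockStart n e j = n * (j + ∑ i ∈ Finset.range j, e i) := by
  simp [blockStart, ← Finset.mul_sum, Finset.sum_add_distrib]

theorem blockStart_succ (n : ℕ) (e : ℕ → ℕ) (j : ℕ) :
    blockStart n e (j + 1) = blockStart n e j + n * (1 + e j) :=
  Finset.sum_range_succ _ _

theorem le_blockStart {n : ℕ} (hn : 0 < n) (e : ℕ → ℕ) (j : ℕ) : j ≤ blockStart n e j := by
  rw [blockStart_eq]
  exact (Nat.le_add_right _ _).trans (Nat.le_mul_of_pos_left _ hn)

/-- A sequence equal to `a` except at multiples `P * q` of `P`, where it takes the values `lo` and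
`hi` alternately along the intervals `3 ^ k ≤ q < 3 ^ (k + 1)`. These intervals grow so fast that
the averages of a real sequence of this kind diverge. -/
def oscillate {β : Type*} (P : ℕ) (lo hi a : β) (j : ℕ) : β :=
  if P ∣ j then if Even (Nat.log 3 (j / P)) then lo else hi else a

theorem sum_range_mul_oscillate {P : ℕ} (hP : 0 < P) (lo hi a : ℝ) (q : ℕ) :
    ∑ j ∈ Finset.range (P * q), oscillate P lo hi a j =
      ∑ i ∈ Finset.range q, ((P - 1) * a + if Even (Nat.log 3 i) then lo else hi) := by
  obtain ⟨P, rfl⟩ := Nat.exists_eq_add_one.2 hP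
  induction q with
  | zero => simp
  | succ q ih =>
    have hfree : ∀ i ∈ Finset.range P, oscillate (P + 1) lo hi a ((P + 1) * q + (i + 1)) = a :=
      fun i hi => if_neg fun hdvd => by
        rw [Nat.dvd_add_right (Nat.dvd_mul_right _ _)] at hdvd
        have := Nat.le_of_dvd i.succ_pos hdvd
        have := Finset.mem_range.1 hi
        omega
    rw [Nat.mul_succ, Finset.sum_range_add, ih, Finset.sum_range_succ' _ P,
      Finset.sum_congr rfl hfree, Finset.sum_range_succ _ q]
    simp [oscillate]

theorem sum_range_three_pow_log {M : Type*} [AddCommMonoid M] (w : ℕ → M) (k : ℕ) :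
    ∑ i ∈ Finset.range (3 ^ (k + 1)), w (Nat.log 3 i) =
      ∑ i ∈ Finset.range (3 ^ k), w (Nat.log 3 i) + (2 * 3 ^ k) • w k := by
  have hlog : ∀ i ∈ Finset.range (2 * 3 ^ k), w (Nat.log 3 (3 ^ k + i)) = w k := fun i hi => by
    have := Finset.mem_range.1 hi
    rw [Nat.log_eq_of_pow_le_of_lt_pow (m := k) (by omega) (by rw [pow_succ]; omega)]
  rw [show 3 ^ (k + 1) = 3 ^ k + 2 * 3 ^ k by ring, Finset.sum_range_add,
    Finset.sum_congr rfl hlog, Finset.sum_const, Finset.card_range]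

theorem eventually_abs_sub_le_of_sum_log {w : ℕ → ℝ} {L κ : ℝ}
    (h : ∀ᶠ q : ℕ in atTop, |∑ i ∈ Finset.range q, w (Nat.log 3 i) - L * q| ≤ κ * q) :
    ∀ᶠ k : ℕ in atTop, |w k - L| ≤ 2 * κ := by
  have hpow := (tendsto_pow_atTop_atTop_of_one_lt (r := 3) (by norm_num)).eventually h
  filter_upwards [hpow, (tendsto_add_atTop_nat 1).eventually hpow] with k hk hk'
  rw [sum_range_three_pow_log, nsmul_eq_mul] at hk'
  push_cast at hk hk'
  have h3 : (0 : ℝ) < 2 * 3 ^ k := by positivity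
  refine le_of_mul_le_mul_left ?_ h3
  rw [← abs_of_pos h3, ← abs_mul, abs_of_pos h3]
  rw [pow_succ] at hk'
  rw [abs_le] at hk hk' ⊢
  constructor <;> linarith

theorem not_eventually_abs_sum_oscillate_sub_le {P : ℕ} (hP : 0 < P) {lo hi a L κ : ℝ}
    (hκ : 4 * P * κ < hi - lo) :
    ¬ ∀ᶠ j : ℕ in atTop, |∑ i ∈ Finset.range j, oscillate P lo hi a i - L * j| ≤ κ * j := by
  intro h
  have hperiods : ∀ᶠ q : ℕ in atTop, |∑ i ∈ Finset.range q,
      ((P - 1) * a + if Even (Nat.log 3 i) then lo else hi) - L * P * q| ≤ κ * P * q := by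
    filter_upwards [(tendsto_id.const_mul_atTop' hP).eventually h] with q hq
    rw [id, sum_range_mul_oscillate hP] at hq
    push_cast at hq
    simpa only [mul_assoc] using hq
  have hvalues := eventually_abs_sub_le_of_sum_log
    (w := fun k => (P - 1) * a + if Even k then lo else hi) hperiods
  obtain ⟨k, hk⟩ := eventually_atTop.1 hvalues
  have hlo := hk (2 * k) (by omega)
  have hhi := hk (2 * k + 1) (by omega)
  simp only [even_two_mul, if_true, Nat.not_even_bit1, if_false] at hlo hhi
  rw [abs_le] at hlo hhi
  linarith

variable {X : Type*} {f : X → X} {φ : X → ℝ} {n : ℕ} {e : ℕ → ℕ} {z : X} {κ K : ℝ}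

theorem abs_birkhoffSum_blockStart_sub_le {v : ℕ → ℝ}
    (hz : ∀ j, |birkhoffSum f φ (n * (1 + e j)) (f^[blockStart n e j] z) - v j| ≤ κ + K * e j)
    (j : ℕ) :
    |birkhoffSum f φ (blockStart n e j) z - ∑ i ∈ Finset.range j, v i| ≤
      κ * j + K * (∑ i ∈ Finset.range j, e i : ℕ) := by
  induction j with
  | zero => simp [blockStart]
  | succ j ih =>
    rw [blockStart_succ, birkhoffSum_add, Finset.sum_range_succ, Finset.sum_range_succ]
    have hj := hz j
    push_cast at ih ⊢
    rw [abs_le] at *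
    constructor <;> linarith

theorem isLittleO_sub_mul_of_tendsto_div {u : ℕ → ℝ} {L : ℝ}
    (hL : Tendsto (fun p : ℕ => u p / p) atTop (𝓝 L)) :
    (fun p : ℕ => u p - L * p) =o[atTop] fun p => (p : ℝ) := by
  refine (isLittleO_iff_tendsto' ?_).2 ((tendsto_sub_nhds_zero_iff.2 hL).congr' ?_)
  all_goals filter_upwards [eventually_gt_atTop 0] with p hp
  · exact fun hp0 => absurd hp0 (by positivity)
  · field_simp

theorem eventually_abs_sum_sub_le_of_tendsto (hn : 0 < n) (he : IsSparse e) {v : ℕ → ℝ}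
    {κ' L : ℝ} (hκ : κ < κ')
    (hz : ∀ j, |birkhoffSum f φ (n * (1 + e j)) (f^[blockStart n e j] z) - v j| ≤ κ + K * e j)
    (hL : Tendsto (fun p : ℕ => birkhoffSum f φ p z / p) atTop (𝓝 L)) :
    ∀ᶠ j : ℕ in atTop, |∑ i ∈ Finset.range j, v i - n * L * j| ≤ κ' * j := by
  let D : ℕ → ℝ := fun j => ((∑ i ∈ Finset.range j, e i : ℕ) : ℝ)
  have hstart : ∀ j, (blockStart n e j : ℝ) = n * (j + D j) := fun j => by
    rw [blockStart_eq]
    push_cast [D]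
    rfl
  have hstartO : (fun j => (blockStart n e j : ℝ)) =O[atTop] fun j => (j : ℝ) := by
    simp only [hstart]
    exact ((isBigO_refl _ _).add he.isBigO).const_mul_left _
  have herror : (fun j => |birkhoffSum f φ (blockStart n e j) z - L * blockStart n e j| +
      (|K| + n * |L|) * D j) =o[atTop] fun j => (j : ℝ) :=
    (((isLittleO_sub_mul_of_tendsto_div hL).comp_tendsto
      (tendsto_atTop_mono (le_blockStart hn e) tendsto_id)).trans_isBigO hstartO).abs_left.add
        (he.const_mul_left _)
  filter_upwards [herror.bound (sub_pos.2 hκ)] with j hj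
  rw [Real.norm_natCast] at hj
  have hD : 0 ≤ D j := Nat.cast_nonneg _
  have hblocks := abs_birkhoffSum_blockStart_sub_le hz j
  have hdrift : |L * blockStart n e j - n * L * j| = n * |L| * D j := by
    rw [hstart, show L * (n * (j + D j)) - n * L * j = n * L * D j by ring, abs_mul, abs_mul,
      Nat.abs_cast, abs_of_nonneg hD]
  have hK : K * D j ≤ |K| * D j := mul_le_mul_of_nonneg_right (le_abs_self K) hD
  rw [abs_sub_comm] at hblocks
  linarith [(le_abs_self _).trans hj, abs_sub_le (∑ i ∈ Finset.range j, v i)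
    (birkhoffSum f φ (blockStart n e j) z) (n * L * j), abs_sub_le
    (birkhoffSum f φ (blockStart n e j) z) (L * blockStart n e j) (n * L * j)]

theorem mem_Iphi_of_oscillate (hn : 0 < n) (he : IsSparse e) {P : ℕ} (hP : 0 < P) {lo hi a : ℝ}
    (hκ : 4 * P * κ < hi - lo)
    (hz : ∀ j, |birkhoffSum f φ (n * (1 + e j)) (f^[blockStart n e j] z) -
      oscillate P lo hi a j| ≤ κ + K * e j) :
    z ∈ Iphi f φ := by
  rintro ⟨L, hL⟩
  obtain ⟨κ', hκκ', hκ'⟩ := exists_between ((lt_div_iff₀' (by positivity)).2 hκ)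
  exact not_eventually_abs_sum_oscillate_sub_le hP ((lt_div_iff₀' (by positivity)).1 hκ')
    (eventually_abs_sum_sub_le_of_tendsto hn he hκκ' hz hL)

end Irregularity

/-! ### Gluing infinitely many orbit segments -/

section Gluing

variable {X : Type*} [PseudoMetricSpace X] {f : X → X} {g : ℕ → ℕ}

theorem isClosed_blowupBall (hf : Continuous f) (x : X) (n : ℕ) (ε : ℝ) :
    IsClosed (blowupBall f g x n ε) := by
  let _ := Classical.decEq ℕ
  have hunion : blowupBall f g x n ε =
      ⋃ Λ ∈ {Λ ∈ (Finset.range n).powerset | (Finset.range n \ Λ).card ≤ g n},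
        ⋂ j ∈ Λ, {y | dist (f^[j] x) (f^[j] y) ≤ ε} := by
    ext y
    simp only [blowupBall, mem_ofPred_eq, mem_iUnion, mem_iInter, Finset.mem_filter,
      Finset.mem_powerset, exists_prop, and_assoc]
  rw [hunion]
  exact isClosed_biUnion_finset fun Λ _ => isClosed_biInter fun j _ =>
    isClosed_le (continuous_const.dist (hf.iterate j)) continuous_const

/-- Consecutive orbit segments of `x 0, x 1, …` of lengths `n 0, n 1, …` are shadowed by a single
orbit, up to a `g`-blowup, as soon as every length `n j` is at least `m (ε j)`. -/
def GluesOrbits (f : X → X) (g : ℕ → ℕ) (m : ℝ → ℕ) : Prop :=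
  ∀ (x : ℕ → X) (ε : ℕ → ℝ) (n : ℕ → ℕ), (∀ j, 0 < ε j) → (∀ j, m (ε j) ≤ n j) →
    ∃ z, ∀ j, f^[∑ i ∈ Finset.range j, n i] z ∈ blowupBall f g (x j) (n j) (ε j)

theorem exists_gluesOrbits_of_gAlmostProduct [CompactSpace X] (hf : Continuous f)
    (hgap : GAlmostProduct f g) : ∃ m, GluesOrbits f g m := by
  obtain ⟨m, -, hm⟩ := hgap
  refine ⟨m, fun x ε n hε hn => ?_⟩
  let shadows : ℕ → Set X := fun k => ⋂ j ∈ Finset.range k,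
    f^[∑ i ∈ Finset.range j, n i] ⁻¹' blowupBall f g (x j) (n j) (ε j)
  have hclosed : ∀ k, IsClosed (shadows k) := fun k =>
    isClosed_biInter fun j _ => (isClosed_blowupBall hf _ _ _).preimage (hf.iterate _)
  have hanti : ∀ k, shadows (k + 1) ⊆ shadows k := fun k =>
    biInter_subset_biInter_left (Finset.range_subset_range.2 k.le_succ)
  obtain ⟨z, hz⟩ := IsCompact.nonempty_iInter_of_sequence_nonempty_isCompact_isClosed shadows hanti
    (fun k => hm k x ε n (fun j _ => hε j) fun j _ => hn j) (hclosed 0).isCompact hclosed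
  exact ⟨z, fun j => mem_iInter₂.1 (mem_iInter.1 hz (j + 1)) j (Finset.self_mem_range_succ j)⟩

end Gluing

/-! ### Visiting the measure center -/

section Visits

variable {X : Type*}

theorem exists_mul_measureReal_le_card_visits [MeasurableSpace X] {f : X → X} {μ : Measure X}
    [IsProbabilityMeasure μ] (hf : MeasurePreserving f μ μ) {U : Set X} [DecidablePred (· ∈ U)]
    (hU : MeasurableSet U) (L : ℕ) :
    ∃ y, L * μ.real U ≤ Finset.card {i ∈ Finset.range L | f^[i] y ∈ U} := by
  let visits : X → ℝ := fun y => ∑ i ∈ Finset.range L, (f^[i] ⁻¹' U).indicator 1 y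
  have hmeas : ∀ i, MeasurableSet (f^[i] ⁻¹' U) := fun i => (hf.iterate i).measurable hU
  have hint : ∀ i ∈ Finset.range L, Integrable ((f^[i] ⁻¹' U).indicator (1 : X → ℝ)) μ :=
    fun i _ => (integrable_const 1).indicator (hmeas i)
  have hmean : ∫ y, visits y ∂μ = L * μ.real U := by
    rw [integral_finsetSum _ hint, Finset.sum_congr rfl fun i _ =>
      (integral_indicator_one (hmeas i)).trans
        ((hf.iterate i).measureReal_preimage hU.nullMeasurableSet)]
    simp
  obtain ⟨y, hy⟩ := exists_integral_le (integrable_finsetSum _ hint)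
  refine ⟨y, hmean.symm.trans_le (hy.trans_eq ?_)⟩
  classical
  simp [indicator_apply, Finset.sum_boole]

variable [PseudoMetricSpace X] {f : X → X} {g : ℕ → ℕ}

/-- Arbitrarily long orbit segments force every orbit shadowing them, up to a `g`-blowup, to visit
`U`. -/
def IsVisitable (f : X → X) (g : ℕ → ℕ) (U : Set X) : Prop :=
  ∃ r > 0, ∀ᶠ L : ℕ in atTop, ∃ y, ∀ z ∈ blowupBall f g y L r, ∃ i < L, f^[i] z ∈ U

theorem isVisitable_univ [Nonempty X] : IsVisitable f g univ :=
  ⟨1, one_pos, (eventually_gt_atTop 0).mono fun _ hL =>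
    ⟨Classical.arbitrary X, fun _ _ => ⟨0, hL, mem_univ _⟩⟩⟩

theorem isVisitable_of_mem_measSupport [MeasurableSpace X] [OpensMeasurableSpace X]
    (hf : Measurable f) (hg : Tendsto (fun n : ℕ => (g n : ℝ) / n) atTop (𝓝 0))
    {μ : ProbabilityMeasure X} (hμ : μ ∈ invSet f) {x : X} (hx : x ∈ measSupport (μ : Measure X))
    {U : Set X} (hU : U ∈ 𝓝 x) : IsVisitable f g U := by
  classical
  obtain ⟨r, hr, hball⟩ := Metric.mem_nhds_iff.1 hU
  let V : Set X := Metric.ball x (r / 2)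
  have hV : 0 < (μ : Measure X).real V :=
    ENNReal.toReal_pos (hx _ (Metric.ball_mem_nhds x (half_pos hr))).ne' (measure_ne_top _ _)
  refine ⟨r / 2, half_pos hr, ?_⟩
  filter_upwards [eventually_mul_lt_mul_of_tendsto_div hg 1 hV] with L hL
  obtain ⟨y, hy⟩ := exists_mul_measureReal_le_card_visits ⟨hf, hμ⟩
    Metric.isOpen_ball.measurableSet L (U := V)
  have hvisits : g L < Finset.card {i ∈ Finset.range L | f^[i] y ∈ V} := by
    rw [mul_one, mul_comm] at hL
    exact_mod_cast hL.trans_le hy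
  refine ⟨y, fun z hz => ?_⟩
  have hfar := (mem_blowupBall_iff_sepCount_le.1 hz).trans_lt hvisits
  obtain ⟨i, hiV, hnear⟩ := Finset.exists_mem_notMem_of_card_lt_card hfar
  obtain ⟨hiL, hiV⟩ := Finset.mem_filter.1 hiV
  refine ⟨i, Finset.mem_range.1 hiL, hball ?_⟩
  have hnear : dist (f^[i] y) (f^[i] z) ≤ r / 2 :=
    not_lt.1 fun h => hnear (Finset.mem_filter.2 ⟨hiL, h⟩)
  rw [Metric.mem_ball] at hiV ⊢
  linarith [dist_triangle_left (f^[i] z) x (f^[i] y)]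

theorem exists_seq_isVisitable_forall_mem_CtrSet [SecondCountableTopology X] [Nonempty X]
    [MeasurableSpace X] [OpensMeasurableSpace X] (hf : Measurable f)
    (hg : Tendsto (fun n : ℕ => (g n : ℝ) / n) atTop (𝓝 0)) :
    ∃ U : ℕ → Set X, (∀ k, IsVisitable f g (U k)) ∧
      ∀ z, (∀ k, ∃ i ≥ k, f^[i] z ∈ U k) → z ∈ CtrSet f := by
  let b := TopologicalSpace.countableBasis X
  have hb : TopologicalSpace.IsTopologicalBasis b := TopologicalSpace.isBasis_countableBasis X
  obtain ⟨V, hV⟩ := ((TopologicalSpace.countable_countableBasis X).mono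
    (sep_subset b (IsVisitable f g))).insert univ |>.exists_eq_range (insert_nonempty _ _)
  have hVvisit : ∀ k, IsVisitable f g (V k) := fun k => by
    rcases hV.symm.subset (mem_range_self k) with h | h
    · exact h ▸ isVisitable_univ
    · exact h.2
  refine ⟨fun k => V k.unpair.1, fun k => hVvisit _, fun z hz => ?_⟩
  refine closure_minimal (iUnion₂_subset fun μ hμ x hx => mem_iInter.2 fun N => ?_)
    (isClosed_iInter fun N => isClosed_closure)
  refine hb.mem_closure_iff.2 fun u hu hxu => ?_
  obtain ⟨a, rfl⟩ := hV.subset (mem_insert_of_mem univ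
    ⟨hu, isVisitable_of_mem_measSupport hf hg hμ hx (hb.mem_nhds hu hxu)⟩)
  obtain ⟨i, hi, hiu⟩ := hz (Nat.pair a N)
  simp only [Nat.unpair_pair] at hiu
  exact ⟨f^[i] z, hiu, i, (Nat.right_le_pair a N).trans hi, rfl⟩

theorem exists_segments_forall_mem_CtrSet [SecondCountableTopology X] [Nonempty X]
    [MeasurableSpace X] [OpensMeasurableSpace X] (hf : Measurable f)
    (hg : Tendsto (fun n : ℕ => (g n : ℝ) / n) atTop (𝓝 0)) (m : ℝ → ℕ) {n : ℕ} (hn : 0 < n) :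
    ∃ (y : ℕ → X) (r : ℕ → ℝ) (l : ℕ → ℕ),
      (∀ k, 0 < r k ∧ 0 < l k ∧ m (r k) ≤ n * (1 + l k)) ∧
      ∀ z, (∀ k, ∃ t ≥ k, f^[t] z ∈ blowupBall f g (y k) (n * (1 + l k)) (r k)) → z ∈ CtrSet f := by
  obtain ⟨U, hU, hCtr⟩ := exists_seq_isVisitable_forall_mem_CtrSet hf hg
  have hsegment : ∀ k, ∃ (y : X) (r : ℝ) (l : ℕ), (0 < r ∧ 0 < l ∧ m r ≤ n * (1 + l)) ∧
      ∀ z ∈ blowupBall f g y (n * (1 + l)) r, ∃ i, f^[i] z ∈ U k := fun k => by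
    obtain ⟨r, hr, hvisit⟩ := hU k
    have hlong : Tendsto (fun l => n * (1 + l)) atTop atTop :=
      (tendsto_add_atTop_nat 1 |>.congr fun l => add_comm l 1).const_mul_atTop' hn
    obtain ⟨l, hl, hm, y, hy⟩ := ((eventually_gt_atTop 0).and ((hlong.eventually_ge_atTop (m r)).and
      (hlong.eventually hvisit))).exists
    exact ⟨y, r, l, ⟨hr, hl, hm⟩, fun z hz => (hy z hz).imp fun i hi => hi.2⟩
  choose y r l hl hvisit using hsegment
  refine ⟨y, r, l, hl, fun z hz => hCtr z fun k => ?_⟩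
  obtain ⟨t, ht, htz⟩ := hz k
  obtain ⟨i, hi⟩ := hvisit k _ htz
  exact ⟨i + t, ht.trans (Nat.le_add_left t i), by rwa [Function.iterate_add_apply]⟩

end Visits

section SparseSchedule

variable (l : ℕ → ℕ)

/-- The number of tasks started before time `j` when the tasks of costs `l 0, l 1, …` are started
greedily in this order, subject to the total cost of the `k` tasks started before time `j` being
at most `j / k`. -/
def sparseCount : ℕ → ℕ
  | 0 => 0
  | j + 1 =>
    if (sparseCount j + 1) * ∑ i ∈ Finset.range (sparseCount j + 1), l i ≤ j then
      sparseCount j + 1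
    else sparseCount j

theorem sparseCount_succ_eq_or (j : ℕ) :
    sparseCount l (j + 1) = sparseCount l j ∨ sparseCount l (j + 1) = sparseCount l j + 1 := by
  rw [sparseCount]
  split_ifs <;> simp

theorem monotone_sparseCount : Monotone (sparseCount l) :=
  monotone_nat_of_le_succ fun j => by
    have := sparseCount_succ_eq_or l j
    omega

theorem sparseCount_le (j : ℕ) : sparseCount l j ≤ j := by
  induction j with
  | zero => simp [sparseCount]
  | succ j ih =>
    have := sparseCount_succ_eq_or l j
    omega

theorem sparseCount_mul_sum_le (j : ℕ) :
    sparseCount l j * ∑ i ∈ Finset.range (sparseCount l j), l i ≤ j := by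
  induction j with
  | zero => simp [sparseCount]
  | succ j ih =>
    rw [sparseCount]
    split_ifs with h <;> omega

theorem tendsto_sparseCount : Tendsto (sparseCount l) atTop atTop := by
  refine tendsto_atTop_atTop_of_monotone (monotone_sparseCount l) fun k => ?_
  induction k with
  | zero => exact ⟨0, Nat.zero_le _⟩
  | succ k ih =>
    obtain ⟨j, hj⟩ := ih
    by_contra! hlt
    let j' := max j ((k + 1) * ∑ i ∈ Finset.range (k + 1), l i)
    have hj' : sparseCount l j' = k :=
      (Nat.lt_succ_iff.1 (hlt j')).antisymm (hj.trans (monotone_sparseCount l (le_max_left _ _)))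
    refine (hlt (j' + 1)).ne ?_
    rw [sparseCount, hj', if_pos (le_max_right _ _)]

theorem exists_sparseCount_eq_and_succ_eq (k : ℕ) :
    ∃ j ≥ k, sparseCount l j = k ∧ sparseCount l (j + 1) = k + 1 := by
  have hex : ∃ j, k < sparseCount l j := ((tendsto_sparseCount l).eventually_gt_atTop k).exists
  obtain ⟨j, hj⟩ : ∃ j, Nat.find hex = j + 1 := Nat.exists_eq_succ_of_ne_zero fun h0 => by
    simpa [h0, sparseCount] using Nat.find_spec hex
  have hlt : k < sparseCount l (j + 1) := hj ▸ Nat.find_spec hex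
  have hle : ¬ k < sparseCount l j := Nat.find_min hex (by omega)
  have := sparseCount_succ_eq_or l j
  exact ⟨j, by have := sparseCount_le l j; omega, by omega, by omega⟩

theorem exists_sparse_schedule :
    ∃ τ : ℕ → Option ℕ, (∀ k, ∃ j ≥ k, τ j = some k) ∧ IsSparse fun i => (τ i).elim 0 l := by
  let c := sparseCount l
  let τ : ℕ → Option ℕ := fun j => if c (j + 1) = c j then none else some (c j)
  have hsum : ∀ j, ∑ i ∈ Finset.range j, (τ i).elim 0 l = ∑ i ∈ Finset.range (c j), l i := fun j =>
    Finset.sum_range_induction _ (fun j => ∑ i ∈ Finset.range (c j), l i)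
      (by simp [c, sparseCount]) j fun i _ => by
      rcases sparseCount_succ_eq_or l i with h | h
      · simp [τ, c, h]
      · simp [τ, c, h, Finset.sum_range_succ]
  refine ⟨τ, fun k => ?_, Asymptotics.isLittleO_iff.2 fun θ hθ => ?_⟩
  · obtain ⟨j, hjk, hj, hj'⟩ := exists_sparseCount_eq_and_succ_eq l k
    exact ⟨j, hjk, by simp [τ, c, hj, hj']⟩
  · have hlarge : ∀ᶠ j in atTop, θ⁻¹ ≤ c j :=
      (tendsto_natCast_atTop_atTop.comp (tendsto_sparseCount l)).eventually_ge_atTop _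
    filter_upwards [hlarge] with j hj
    rw [Real.norm_natCast, Real.norm_natCast, hsum]
    have hcost : (c j : ℝ) * (∑ i ∈ Finset.range (c j), l i : ℕ) ≤ j := by
      exact_mod_cast sparseCount_mul_sum_le l j
    rw [← inv_mul_le_iff₀ hθ]
    exact (mul_le_mul_of_nonneg_right hj (Nat.cast_nonneg _)).trans hcost

end SparseSchedule

/-! ### Irregular points that visit the measure center and trace prescribed blocks -/

section Construction

variable {X : Type*}

theorem abs_oscillate_le {P : ℕ} {lo hi a b : ℝ} (hlo : |lo| ≤ b) (hhi : |hi| ≤ b) (ha : |a| ≤ b)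
    (j : ℕ) : |oscillate P lo hi a j| ≤ b := by
  rw [oscillate]
  split_ifs <;> assumption

theorem abs_birkhoffSum_sub_oscillate_le_mul {f : X → X} {φ : X → ℝ} {B : ℝ}
    (hφB : ∀ x, |φ x| ≤ B) (n P : ℕ) (lo hi z : X) (a : ℝ) {l : ℕ} (hl : 0 < l) (j : ℕ) :
    |birkhoffSum f φ (n * (1 + l)) z -
      oscillate P (birkhoffSum f φ n lo) (birkhoffSum f φ n hi) a j| ≤ (3 * n * B + |a|) * l := by
  have hB0 : 0 ≤ B := (abs_nonneg _).trans (hφB z)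
  have hl1 : (1 : ℝ) ≤ l := by exact_mod_cast hl
  have hnB : 0 ≤ n * B := by positivity
  have hsum := abs_birkhoffSum_le (f := f) hφB (n * (1 + l)) z
  have hosc : |oscillate P (birkhoffSum f φ n lo) (birkhoffSum f φ n hi) a j| ≤ n * B + |a| :=
    abs_oscillate_le
      ((abs_birkhoffSum_le hφB n lo).trans (le_add_of_nonneg_right (abs_nonneg a)))
      ((abs_birkhoffSum_le hφB n hi).trans (le_add_of_nonneg_right (abs_nonneg a)))
      (le_add_of_nonneg_left hnB) j
  push_cast at hsum
  refine (abs_sub _ _).trans ((add_le_add hsum hosc).trans ?_)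
  nlinarith [mul_le_mul_of_nonneg_left hl1 hnB, mul_le_mul_of_nonneg_left hl1 (abs_nonneg a)]

variable [PseudoMetricSpace X] {f : X → X} {g : ℕ → ℕ} {φ : X → ℝ} {n P : ℕ} {δ κ a : ℝ}

theorem abs_birkhoffSum_sub_oscillate_le
    (htrace : ∀ x, ∀ z ∈ blowupBall f g x n δ, |birkhoffSum f φ n x - birkhoffSum f φ n z| ≤ κ)
    {lo hi c z : X} {j : ℕ} (hc : |birkhoffSum f φ n c - a| ≤ κ)
    (hz : z ∈ blowupBall f g (oscillate P lo hi c j) n δ) :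
    |birkhoffSum f φ n z - oscillate P (birkhoffSum f φ n lo) (birkhoffSum f φ n hi) a j| ≤
      2 * κ := by
  have hκ : 0 ≤ κ := (abs_nonneg _).trans hc
  have hxz := htrace _ z hz
  rw [abs_sub_comm] at hxz
  rw [oscillate] at hxz ⊢
  split_ifs at hxz ⊢
  · linarith
  · linarith
  · linarith [abs_sub_le (birkhoffSum f φ n z) (birkhoffSum f φ n c) a]

theorem exists_isSparse_forall_exists_mem_CtrSet [SecondCountableTopology X] [Nonempty X]
    [MeasurableSpace X] [OpensMeasurableSpace X] (hf : Measurable f)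
    (hg : Tendsto (fun n : ℕ => (g n : ℝ) / n) atTop (𝓝 0)) {m : ℝ → ℕ} (hglue : GluesOrbits f g m)
    (hn : 0 < n) (hδ : 0 < δ) (hm : m δ ≤ n) :
    ∃ e, IsSparse e ∧ ∀ x : ℕ → X, ∃ z ∈ CtrSet f, ∀ j, e j = 0 →
      f^[blockStart n e j] z ∈ blowupBall f g (x j) n δ := by
  obtain ⟨y, r, l, hsegment, hCtr⟩ := exists_segments_forall_mem_CtrSet hf hg m hn
  obtain ⟨τ, hτ, hsparse⟩ := exists_sparse_schedule l
  refine ⟨fun j => (τ j).elim 0 l, hsparse, fun x => ?_⟩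
  obtain ⟨z, hz⟩ := hglue (fun j => (τ j).elim (x j) y) (fun j => (τ j).elim δ r)
    (fun j => n * (1 + (τ j).elim 0 l))
    (fun j => by cases τ j <;> simp [hδ, hsegment])
    (fun j => by cases τ j <;> simp [hm, hsegment])
  refine ⟨z, hCtr z fun k => ?_, fun j hj => ?_⟩
  · obtain ⟨j, hjk, hj⟩ := hτ k
    have hvisit := hz j
    simp only [hj, Option.elim_some] at hvisit
    exact ⟨_, hjk.trans (le_blockStart hn _ j), hvisit⟩
  · have hfree : τ j = none := by
      cases h : τ j with
      | none => rfl
      | some k => exact absurd hj (by simp [h, (hsegment k).2.1.ne'])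
    simpa [hfree, blockStart] using hz j

/-- Every sequence of points of `F` is traced by the orbit of a point of `Z`, within `δ` and up to
a `g`-blowup, along the blocks of length `n` whose index is not a multiple of `P`. -/
def TracesFreeBlocks (f : X → X) (g : ℕ → ℕ) (Z F : Set X) (n P : ℕ) (e : ℕ → ℕ) (δ : ℝ) : Prop :=
  ∀ c : ℕ → X, (∀ i, c i ∈ F) → ∃ z ∈ Z, ∀ i, ¬ P ∣ i → e i = 0 →
    f^[blockStart n e i] z ∈ blowupBall f g (c i) n δ

theorem exists_tracesFreeBlocks [SecondCountableTopology X] [Nonempty X]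
    [MeasurableSpace X] [OpensMeasurableSpace X] (hf : Measurable f)
    (hg : Tendsto (fun n : ℕ => (g n : ℝ) / n) atTop (𝓝 0)) {m : ℝ → ℕ} (hglue : GluesOrbits f g m)
    {B : ℝ} (hφB : ∀ x, |φ x| ≤ B) (hn : 0 < n) (hP : 0 < P) (hδ : 0 < δ) (hm : m δ ≤ n)
    (htrace : ∀ x, ∀ z ∈ blowupBall f g x n δ, |birkhoffSum f φ n x - birkhoffSum f φ n z| ≤ κ)
    {F : Set X} (hF : ∀ x ∈ F, |birkhoffSum f φ n x - a| ≤ κ) {lo hi : X}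
    (hosc : 8 * P * κ < birkhoffSum f φ n hi - birkhoffSum f φ n lo) :
    ∃ e, IsSparse e ∧ TracesFreeBlocks f g (Iphi f φ ∩ CtrSet f) F n P e δ := by
  obtain ⟨e, he, hblocks⟩ := exists_isSparse_forall_exists_mem_CtrSet hf hg hglue hn hδ hm
  refine ⟨e, he, fun c hc => ?_⟩
  obtain ⟨z, hzC, hz⟩ := hblocks fun j => oscillate P lo hi (c j) j
  refine ⟨z, ⟨?_, hzC⟩, fun i hi hei => by simpa [oscillate, hi] using hz i hei⟩
  have hκ : 0 ≤ κ := (abs_nonneg _).trans (hF _ (hc 0))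
  refine mem_Iphi_of_oscillate hn he hP (lo := birkhoffSum f φ n lo) (hi := birkhoffSum f φ n hi)
    (a := a) (κ := 2 * κ) (K := 3 * n * B + |a|) (by linarith) fun j => ?_
  rcases Nat.eq_zero_or_pos (e j) with hej | hej
  · simpa [hej] using abs_birkhoffSum_sub_oscillate_le htrace (hF _ (hc j)) (hz j hej)
  · exact (abs_birkhoffSum_sub_oscillate_le_mul hφB n P lo hi _ a hej j).trans
      (le_add_of_nonneg_left (by positivity))

theorem exists_eventually_exists_tracesFreeBlocks [CompactSpace X] [MeasurableSpace X]
    [BorelSpace X] (hf : Continuous f)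
    (hg : Tendsto (fun n : ℕ => (g n : ℝ) / n) atTop (𝓝 0)) (hgap : GAlmostProduct f g)
    (hφ : Continuous φ) (hne : (Iphi f φ).Nonempty) (hP : 0 < P) {ε : ℝ} (hε : 0 < ε) :
    ∃ η > (0 : ℝ), ∃ δ > 0, δ ≤ ε ∧ ∀ᶠ n : ℕ in atTop, ∀ (F : Set X) (a : ℝ),
      (∀ x ∈ F, |birkhoffSum f φ n x - a| ≤ n * η) →
        ∃ e, IsSparse e ∧ TracesFreeBlocks f g (Iphi f φ ∩ CtrSet f) F n P e δ := by
  have := hne.nonempty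
  obtain ⟨B, hφB⟩ := isCompact_univ.exists_bound_of_continuousOn hφ.continuousOn
  replace hφB : ∀ x, |φ x| ≤ B := fun x => hφB x (mem_univ x)
  obtain ⟨m, hglue⟩ := exists_gluesOrbits_of_gAlmostProduct hf hgap
  obtain ⟨α, β, hαβ, hextreme⟩ := exists_lt_forall_exists_birkhoffSum_le_ge hφB hne
  have hη : 0 < (β - α) / (9 * P) := div_pos (sub_pos.2 hαβ) (by positivity)
  obtain ⟨δ, hδ, hδε, htrace⟩ := exists_eventually_abs_birkhoffSum_sub_le (f := f) hφ hg hη hε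
  refine ⟨_, hη, δ, hδ, hδε, ?_⟩
  filter_upwards [htrace, eventually_gt_atTop 0, eventually_ge_atTop (m δ)]
    with n htrace hn hm F a hF
  obtain ⟨⟨lo, hlo⟩, hi, hhi⟩ := hextreme n hn
  refine exists_tracesFreeBlocks hf.measurable hg hglue hφB hn hP hδ hm htrace hF (lo := lo)
    (hi := hi) ?_
  calc 8 * P * (n * ((β - α) / (9 * P))) = 8 / 9 * (n * (β - α)) := by field_simp
    _ < n * (β - α) := by
        have : 0 < n * (β - α) := mul_pos (by positivity) (sub_pos.2 hαβ)
        linarith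
    _ ≤ birkhoffSum f φ n hi - birkhoffSum f φ n lo := by linarith

theorem nonempty_Iphi_inter_CtrSet [CompactSpace X] [MeasurableSpace X] [BorelSpace X]
    (hf : Continuous f) (hg : Tendsto (fun n : ℕ => (g n : ℝ) / n) atTop (𝓝 0))
    (hgap : GAlmostProduct f g) (hφ : Continuous φ) (hne : (Iphi f φ).Nonempty) :
    (Iphi f φ ∩ CtrSet f).Nonempty := by
  obtain ⟨η, hη, δ, -, -, hlong⟩ :=
    exists_eventually_exists_tracesFreeBlocks hf hg hgap hφ hne one_pos one_pos
  obtain ⟨n, hn⟩ := hlong.exists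
  obtain ⟨x, -⟩ := hne
  obtain ⟨e, -, htraces⟩ := hn {x} (birkhoffSum f φ n x) fun y hy => by
    rw [mem_singleton_iff.1 hy, sub_self, abs_zero]
    positivity
  obtain ⟨z, hz, -⟩ := htraces (fun _ => x) fun _ => rfl
  exact ⟨z, hz⟩

end Construction

/-! ### Entropy of a set tracing free blocks -/

section FreeBlocks

/-- The indices below `j` of the blocks in which the traced point may be chosen freely. -/
def freeBlocks (P : ℕ) (e : ℕ → ℕ) (j : ℕ) : Finset ℕ :=
  {i ∈ Finset.range j | ¬ P ∣ i ∧ e i = 0}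

theorem card_multiples_range_le (P j : ℕ) :
    Finset.card {i ∈ Finset.range j | P ∣ i} ≤ j / P + 1 := by
  rw [← Nat.Ioc_filter_dvd_card_eq_div j P]
  refine (Finset.card_le_card fun i hi => ?_).trans (Finset.card_insert_le 0 _)
  simp only [Finset.mem_filter, Finset.mem_range, Finset.mem_insert, Finset.mem_Ioc] at hi ⊢
  have := hi.1
  exact (Nat.eq_zero_or_pos i).imp_right fun hi0 => ⟨⟨hi0, by omega⟩, hi.2⟩

theorem le_card_freeBlocks_add (P : ℕ) (e : ℕ → ℕ) (j : ℕ) :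
    j ≤ (freeBlocks P e j).card + (j / P + 1) + ∑ i ∈ Finset.range j, e i := by
  classical
  have hcovered : Finset.range j ⊆ freeBlocks P e j ∪ {i ∈ Finset.range j | P ∣ i} ∪
      {i ∈ Finset.range j | e i ≠ 0} := fun i hi => by
    simp only [freeBlocks, Finset.mem_union, Finset.mem_filter]
    tauto
  have hexceptional : Finset.card {i ∈ Finset.range j | e i ≠ 0} ≤ ∑ i ∈ Finset.range j, e i := by
    rw [Finset.card_filter]
    exact Finset.sum_le_sum fun i _ => by split_ifs <;> omega
  calc j = (Finset.range j).card := (Finset.card_range j).symm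
    _ ≤ _ := Finset.card_le_card hcovered
    _ ≤ _ := (Finset.card_union_le _ _).trans
      (add_le_add (Finset.card_union_le _ _) hexceptional)
    _ ≤ _ := by
      have := card_multiples_range_le P j
      omega

theorem IsSparse.isLittleO_succ {e : ℕ → ℕ} (he : IsSparse e) :
    (fun j : ℕ => 1 + ((∑ i ∈ Finset.range (j + 1), e i : ℕ) : ℝ)) =o[atTop] fun j => (j : ℝ) := by
  have hone : (fun _ : ℕ => (1 : ℝ)) =o[atTop] fun j => (j : ℝ) :=
    Asymptotics.isLittleO_const_left.2 (Or.inr <| by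
      simpa [Function.comp_def] using tendsto_natCast_atTop_atTop)
  have hsucc : (fun j : ℕ => ((j + 1 : ℕ) : ℝ)) =O[atTop] fun j => (j : ℝ) := by
    simpa using (Asymptotics.isBigO_refl _ _).add hone.isBigO
  exact hone.add ((he.comp_tendsto (tendsto_add_atTop_nat 1)).trans_isBigO hsucc)

theorem eventually_mul_blockStart_le_mul_card_freeBlocks {s u : ℝ} {P : ℕ} (hs : 0 ≤ s)
    (hsu : s < u * (1 - 1 / P)) (n : ℕ) {e : ℕ → ℕ} (he : IsSparse e) :
    ∀ᶠ j : ℕ in atTop, s * blockStart n e (j + 1) ≤ u * n * (freeBlocks P e j).card := by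
  have hu : 0 ≤ u := by
    by_contra! hu
    have : (1 : ℝ) / P ≤ 1 := by simpa using Nat.cast_inv_le_one P
    nlinarith
  have hθ : 0 < (u * (1 - 1 / P) - s) / (s + u + 1) := div_pos (sub_pos.2 hsu) (by positivity)
  filter_upwards [Asymptotics.isLittleO_iff.1 he.isLittleO_succ hθ] with j hj
  let D : ℕ → ℕ := fun j => ∑ i ∈ Finset.range j, e i
  have hDmono : (D j : ℝ) ≤ D (j + 1) := by
    exact_mod_cast Finset.sum_le_sum_of_subset (Finset.range_subset_range.2 j.le_succ)
  rw [Real.norm_natCast, Real.norm_of_nonneg (by positivity), div_mul_eq_mul_div,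
    le_div_iff₀ (by positivity)] at hj
  have hcount : (j : ℝ) * (1 - 1 / P) - (1 + D (j + 1)) ≤ (freeBlocks P e j).card := by
    have hle : (j : ℝ) ≤ (freeBlocks P e j).card + ((j / P : ℕ) + 1) + D j := by
      exact_mod_cast le_card_freeBlocks_add P e j
    have hdiv : ((j / P : ℕ) : ℝ) ≤ j / P := Nat.cast_div_le
    rw [mul_sub, mul_one_div]
    linarith
  have hrate : s * (j + 1 + D (j + 1)) ≤ u * (freeBlocks P e j).card := by
    nlinarith [mul_le_mul_of_nonneg_left hcount hu]
  calc s * blockStart n e (j + 1) = n * (s * (j + 1 + D (j + 1))) := by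
        rw [blockStart_eq]
        push_cast [D]
        ring
    _ ≤ n * (u * (freeBlocks P e j).card) := by gcongr
    _ = u * n * (freeBlocks P e j).card := by ring

theorem strictMono_blockStart {n : ℕ} (hn : 0 < n) (e : ℕ → ℕ) : StrictMono (blockStart n e) :=
  strictMono_nat_of_lt_succ fun j => by
    rw [blockStart_succ]
    exact Nat.lt_add_of_pos_right (Nat.mul_pos hn (by omega))

theorem eventually_exists_blockStart_le_lt {n : ℕ} (hn : 0 < n) (e : ℕ → ℕ) {Q : ℕ → Prop}
    (hQ : ∀ᶠ j in atTop, Q j) :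
    ∀ᶠ t in atTop, ∃ j, Q j ∧ blockStart n e j ≤ t ∧ t < blockStart n e (j + 1) := by
  obtain ⟨J, hJ⟩ := eventually_atTop.1 hQ
  have hmono := strictMono_blockStart hn e
  filter_upwards [eventually_ge_atTop (blockStart n e J)] with t ht
  obtain ⟨j, hj, hj'⟩ := hmono.exists_between_of_tendsto_atTop hmono.tendsto_atTop (x := t + 1)
    (by simp [blockStart])
  refine ⟨j, hJ j ?_, Nat.lt_succ_iff.1 hj, hj'⟩
  exact Nat.lt_succ_iff.1 (hmono.lt_iff_lt.1 (ht.trans_lt hj'))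

end FreeBlocks

section Coding

variable {X : Type*} [PseudoMetricSpace X] {f : X → X} {g : ℕ → ℕ} {n P t : ℕ} {e : ℕ → ℕ}
  {δ ε : ℝ}

theorem sepCount_le_add {a b z z' : X} {ρ : ℝ} (hzz' : ∀ i < n, dist (f^[i] z) (f^[i] z') ≤ ρ)
    (hε : 2 * δ + ρ ≤ ε) :
    sepCount f a b n ε ≤ sepCount f a z n δ + sepCount f b z' n δ := by
  classical
  refine (Finset.card_le_card fun i hi => ?_).trans (Finset.card_union_le _ _)
  simp only [Finset.mem_union, Finset.mem_filter] at hi ⊢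
  by_contra! hnear
  have := hnear.1 hi.1
  have := hnear.2 hi.1
  have := hzz' i (Finset.mem_range.1 hi.1)
  linarith [dist_triangle4_right (f^[i] a) (f^[i] b) (f^[i] z) (f^[i] z')]

theorem eq_of_mem_blowupBall_of_mem_bowenBall {F : Set X}
    (hsep : F.Pairwise fun x y => 2 * g n < sepCount f x y n (3 * ε)) (hδ : 2 * δ ≤ ε) {M : ℕ}
    (hM : M + n ≤ t) {a b x z z' : X} (ha : a ∈ F) (hb : b ∈ F) (hz : z ∈ bowenBall f x t ε)
    (hz' : z' ∈ bowenBall f x t ε) (haz : f^[M] z ∈ blowupBall f g a n δ)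
    (hbz' : f^[M] z' ∈ blowupBall f g b n δ) : a = b := by
  rw [mem_blowupBall_iff_sepCount_le] at haz hbz'
  refine hsep.eq ha hb (not_lt.2 ?_)
  have hzz' : ∀ i < n, dist (f^[i] (f^[M] z)) (f^[i] (f^[M] z')) ≤ 2 * ε := fun i hi => by
    rw [← Function.iterate_add_apply, ← Function.iterate_add_apply]
    linarith [hz (i + M) (by omega), hz' (i + M) (by omega),
      dist_triangle_left (f^[i + M] z) (f^[i + M] z') (f^[i + M] x)]
  have := sepCount_le_add (a := a) (b := b) (δ := δ) (ε := 3 * ε) hzz' (by linarith)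
  omega

theorem blockStart_add_le_of_mem_freeBlocks {i j : ℕ} (hi : i ∈ freeBlocks P e j) :
    blockStart n e i + n ≤ blockStart n e j := by
  simp only [freeBlocks, Finset.mem_filter, Finset.mem_range] at hi
  have hsucc : blockStart n e (i + 1) = blockStart n e i + n := by
    simp [blockStart_succ, hi.2.2]
  exact hsucc ▸ Finset.sum_le_sum_of_subset (Finset.range_subset_range.2 hi.1)

theorem le_hB_of_tracesFreeBlocks [CompactSpace X] {Z : Set X} {F : Finset X} {s u : ℝ}
    (hn : 0 < n) (hs : 0 ≤ s) (hsu : s < u * (1 - 1 / P)) (hcard : Real.exp (u * n) ≤ F.card)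
    (hsep : (F : Set X).Pairwise fun x y => 2 * g n < sepCount f x y n (3 * ε)) (hε : 0 < ε)
    (hδ : 2 * δ ≤ ε) (he : IsSparse e) (htraces : TracesFreeBlocks f g Z F n P e δ) :
    s ≤ hB f Z ε := by
  have hF : F.Nonempty := Finset.card_pos.1 (by exact_mod_cast (Real.exp_pos _).trans_le hcard)
  have := hF.to_subtype
  choose z hzZ hz using fun c : ℕ → F => htraces (fun i => c i) fun i => (c i).2
  refine le_hB_of_coding hε hzZ ?_
  filter_upwards [eventually_exists_blockStart_le_lt hn e
    (eventually_mul_blockStart_le_mul_card_freeBlocks hs hsu n he)] with t ht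
  obtain ⟨j, hrate, hjt, htj⟩ := ht
  refine ⟨freeBlocks P e j, ?_, fun x c c' hc hc' i hi => Subtype.ext ?_⟩
  · calc Real.exp (s * t) ≤ Real.exp (u * n * (freeBlocks P e j).card) := by
          refine Real.exp_le_exp.2 (le_trans ?_ hrate)
          gcongr
      _ = Real.exp (u * n) ^ (freeBlocks P e j).card := by rw [mul_comm, Real.exp_nat_mul]
      _ ≤ (Fintype.card F : ℝ) ^ (freeBlocks P e j).card := by
          rw [Fintype.card_coe]
          gcongr
  · obtain ⟨-, hPi, hei⟩ := Finset.mem_filter.1 hi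
    exact eq_of_mem_blowupBall_of_mem_bowenBall hsep hδ
      ((blockStart_add_le_of_mem_freeBlocks hi).trans hjt) (c i).2 (c' i).2 hc hc'
      (hz c i hPi hei) (hz c' i hPi hei)

theorem hB_univ_le_hB_Iphi_inter_CtrSet [CompactSpace X] [MeasurableSpace X] [BorelSpace X]
    (hf : Continuous f) (hg : Tendsto (fun n : ℕ => (g n : ℝ) / n) atTop (𝓝 0))
    (hgap : GAlmostProduct f g) {φ : X → ℝ} (hφ : Continuous φ) (hne : (Iphi f φ).Nonempty)
    (hε : 0 < ε) : hB f univ (7 * ε) ≤ hB f (Iphi f φ ∩ CtrSet f) ε := by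
  have := hne.nonempty
  refine le_of_forall_lt_imp_le_of_dense fun s hs => ?_
  rcases lt_or_ge s 0 with hs0 | hs0
  · exact hs0.le.trans (hB_nonneg (nonempty_Iphi_inter_CtrSet hf hg hgap hφ hne) ε)
  obtain ⟨u, hsu, hu⟩ := exists_between hs
  obtain ⟨P, hP, hsuP⟩ : ∃ P : ℕ, 0 < P ∧ s < u * (1 - 1 / P) := by
    have hlim : Tendsto (fun P : ℕ => u * (1 - 1 / (P : ℝ))) atTop (𝓝 u) := by
      simpa using (tendsto_one_div_atTop_nhds_zero_nat.const_sub (1 : ℝ)).const_mul u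
    exact ((eventually_gt_atTop 0).and (hlim.eventually_const_lt hsu)).exists
  obtain ⟨η, hη, δ, hδ, hδε, htraces⟩ :=
    exists_eventually_exists_tracesFreeBlocks hf hg hgap hφ hne hP (half_pos hε)
  obtain ⟨B, hφB⟩ := isCompact_univ.exists_bound_of_continuousOn hφ.continuousOn
  obtain ⟨θ, hθ, hsep⟩ := exists_pairwise_le_sepCount_birkhoffSum_close
    (fun x => hφB x (mem_univ x)) hη hu (ρ := 3 * ε) (by positivity) (by linarith)
  obtain ⟨n, hn, htraces, ⟨F, hcard, hF, a, ha⟩, hgn⟩ := ((eventually_gt_atTop 0).and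
    (htraces.and (hsep.and (eventually_mul_lt_mul_of_tendsto_div hg 2 hθ)))).exists
  obtain ⟨e, he, htraces⟩ := htraces F a ha
  refine le_hB_of_tracesFreeBlocks hn hs0 hsuP hcard (fun x hx y hy hxy => ?_) hε (by linarith) he
    htraces
  have := hgn.trans_le (hF hx hy hxy)
  rw [mul_comm] at this
  exact_mod_cast this

end Coding

end MMD

theorem stmt7_general {X : Type*} [PseudoMetricSpace X] [CompactSpace X] [MeasurableSpace X]
    [BorelSpace X] {f : X → X} (hf : Continuous f) {g : ℕ → ℕ}
    (hg : Tendsto (fun n : ℕ => (g n : ℝ) / n) atTop (𝓝 0)) (hgap : GAlmostProduct f g)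
    {φ : X → ℝ} (hφ : Continuous φ) (hne : (Iphi f φ).Nonempty) :
    (Iphi f φ ∩ CtrSet f).Nonempty ∧
    mdimUpper f (Iphi f φ) = mdimUpper f (Iphi f φ ∩ CtrSet f) ∧
    mdimUpper f (Iphi f φ) = mdimUpper f (Set.univ : Set X) := by
  have hneC : (Iphi f φ ∩ CtrSet f).Nonempty := nonempty_Iphi_inter_CtrSet hf hg hgap hφ hne
  have hentropy : ∀ ε > 0, hB f univ (7 * ε) ≤ hB f (Iphi f φ ∩ CtrSet f) ε := fun _ hε =>
    hB_univ_le_hB_Iphi_inter_CtrSet hf hg hgap hφ hne hε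
  have hIphiC : mdimUpper f (Iphi f φ ∩ CtrSet f) = mdimUpper f univ :=
    mdimUpper_eq_of_hB_rescale_le (by norm_num) hneC (subset_univ _) hentropy
  have hIphi : mdimUpper f (Iphi f φ) = mdimUpper f univ :=
    mdimUpper_eq_of_hB_rescale_le (by norm_num) hne (subset_univ _) fun ε hε =>
      (hentropy ε hε).trans (hB_mono f hneC inter_subset_left hε)
  exact ⟨hneC, hIphi.trans hIphiC.symm, hIphi⟩

theorem stmt7 {X : Type*} [MetricSpace X] [CompactSpace X] [Nonempty X]
    [MeasurableSpace X] [BorelSpace X]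
    (f : X → X) (hf : Continuous f) (g : ℕ → ℕ) (hg : IsBlowup g)
    (hgap : GAlmostProduct f g)
    (φ : X → ℝ) (hφ : Continuous φ) (hne : (Iphi f φ).Nonempty) :
    (Iphi f φ ∩ CtrSet f).Nonempty ∧
    mdimUpper f (Iphi f φ) = mdimUpper f (Iphi f φ ∩ CtrSet f) ∧
    mdimUpper f (Iphi f φ) = mdimUpper f (Set.univ : Set X) :=
  stmt7_general hf hg.ratio_tendsto_zero hgap hφ hne

end
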